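/- arXiv:1601.03179 — 9 statements merged into one kernel-verified Lean document; each statement's English description precedes it below -/
import Mathlib

section
/- For every x ∈ [0,1], the double integral ∫_{[0,1]²} f_{(y,z)}(x) d(y,z) equals φ(x), where φ(x) = −8[(1−x)·ln(1−x) + x·(1−ln 2)] for x ∈ [0,1/2] and φ(x) = −8[x·ln x + (1−x)·(1−ln 2)] for x ∈ [1/2,1]. -/
open MeasureTheory Real

/-- The symmetric triangular density on `[0,1]` with support endpoints `y` and `z`. -/
noncomputable def triDens (y z x : ℝ) : ℝ :=
  (2 / |y - z|) * max 0 (1 - (2 / |y - z|) * |x - (y + z) / 2|)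

/-!
The density `triDens y z x` is symmetric in `y, z` and vanishes unless `x` lies strictly between
them, so its integral over `[a, b]²` is twice the integral over `y < x < z`. For fixed `y < x` the
inner integral over `z` splits where `x` is the midpoint of `[y, z]`, that is at `z = 2x - y`:
the density is `4 (z - x) / (z - y)²` before that point and `4 (x - y) / (z - y)²` after it. If
`x` is at most the midpoint of `[a, b]`, then `2x - y ≤ b` for every `y ∈ [a, x)`, so the inner
integral is given by a single formula; the reflection `t ↦ a + b - t` exchanges the two halves of
`[a, b]`.
-/

open Set

variable {a b c d x y z : ℝ}

theorem setIntegral_prod_union_prod_of_swap_eq {α E : Type*} [MeasurableSpace α]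
    [NormedAddCommGroup E] [NormedSpace ℝ E] {μ : Measure α} [SFinite μ] {f : α × α → E}
    (hf : ∀ p, f p.swap = f p) {s t : Set α} (hs : MeasurableSet s) (ht : MeasurableSet t)
    (hst : Disjoint s t) (hfi : IntegrableOn f (s ×ˢ t) (μ.prod μ)) :
    ∫ p in s ×ˢ t ∪ t ×ˢ s, f p ∂μ.prod μ = (2 : ℝ) • ∫ p in s ×ˢ t, f p ∂μ.prod μ := by
  have hswap : f ∘ Prod.swap = f := funext hf
  have hfi_swap : IntegrableOn f (t ×ˢ s) (μ.prod μ) := hswap ▸ hfi.swap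
  have hintegral_swap : ∫ p in t ×ˢ s, f p ∂μ.prod μ = ∫ p in s ×ˢ t, f p ∂μ.prod μ := by
    simpa only [hf] using setIntegral_prod_swap (μ := μ) (ν := μ) s t f
  rw [setIntegral_union (disjoint_prod.2 (.inl hst)) (ht.prod hs) hfi hfi_swap, hintegral_swap,
    two_smul]

theorem intervalIntegrable_inv_sub (hc : y < c) (hd : y < d) :
    IntervalIntegrable (fun z ↦ (z - y)⁻¹) volume c d :=
  intervalIntegral.intervalIntegrable_inv
    (fun _ hz ↦ (sub_pos.2 ((lt_min hc hd).trans_le hz.1)).ne') (by fun_prop)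

theorem intervalIntegrable_inv_const_sub (hc : c < b) (hd : d < b) :
    IntervalIntegrable (fun y ↦ (b - y)⁻¹) volume c d :=
  intervalIntegral.intervalIntegrable_inv
    (fun _ hy ↦ (sub_pos.2 (hy.2.trans_lt (max_lt hc hd))).ne') (by fun_prop)

theorem intervalIntegrable_inv_sub_sq (hc : y < c) (hd : y < d) :
    IntervalIntegrable (fun z ↦ ((z - y) ^ 2)⁻¹) volume c d :=
  intervalIntegral.intervalIntegrable_inv
    (fun _ hz ↦ (pow_pos (sub_pos.2 ((lt_min hc hd).trans_le hz.1)) 2).ne') (by fun_prop)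

theorem integral_inv_sub (hc : y < c) (hd : y < d) :
    ∫ z in c..d, (z - y)⁻¹ = log ((d - y) / (c - y)) := by
  rw [intervalIntegral.integral_comp_sub_right (fun t ↦ t⁻¹),
    integral_inv_of_pos (sub_pos.2 hc) (sub_pos.2 hd)]

theorem integral_inv_sub_sq (hc : y < c) (hd : y < d) :
    ∫ z in c..d, ((z - y) ^ 2)⁻¹ = (c - y)⁻¹ - (d - y)⁻¹ := by
  have hzero : (0 : ℝ) ∉ uIcc (c - y) (d - y) :=
    notMem_uIcc_of_lt (sub_pos.2 hc) (sub_pos.2 hd)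
  calc ∫ z in c..d, ((z - y) ^ 2)⁻¹
    _ = ∫ t in (c - y)..(d - y), t ^ (-2 : ℤ) := by
      simp only [intervalIntegral.integral_comp_sub_right (fun t ↦ (t ^ 2)⁻¹), zpow_neg,
        zpow_ofNat]
    _ = (c - y)⁻¹ - (d - y)⁻¹ := by
      rw [integral_zpow (.inr ⟨by norm_num, hzero⟩)]
      norm_num [zpow_neg_one, div_neg]

theorem triDens_comm (y z x : ℝ) : triDens y z x = triDens z y x := by
  simp only [triDens, abs_sub_comm y z, add_comm y z]

theorem triDens_nonneg (y z x : ℝ) : 0 ≤ triDens y z x := by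
  unfold triDens
  positivity

theorem triDens_sub_left (c y z x : ℝ) : triDens (c - y) (c - z) (c - x) = triDens y z x := by
  have hwidth : c - y - (c - z) = z - y := by ring
  have hcenter : c - x - (c - y + (c - z)) / 2 = (y + z) / 2 - x := by ring
  simp only [triDens, hwidth, hcenter, abs_sub_comm z y, abs_sub_comm _ x]

theorem triDens_of_le_midpoint (hyz : y < z) (hyx : y ≤ x) (hx : x ≤ (y + z) / 2) :
    triDens y z x = 4 * (x - y) / (z - y) ^ 2 := by
  have hwidth : 0 < z - y := sub_pos.2 hyz
  have hheight : 1 - 2 / (z - y) * ((y + z) / 2 - x) = 2 * (x - y) / (z - y) := by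
    field_simp
    ring
  have hheight_nonneg : 0 ≤ 2 * (x - y) / (z - y) :=
    div_nonneg (by linarith) hwidth.le
  rw [triDens, abs_sub_comm y z, abs_of_pos hwidth, abs_sub_comm x,
    abs_of_nonneg (sub_nonneg.2 hx), hheight, max_eq_right hheight_nonneg]
  field_simp
  ring

theorem triDens_of_midpoint_le (hyz : y < z) (hx : (y + z) / 2 ≤ x) (hxz : x ≤ z) :
    triDens y z x = 4 * (z - x) / (z - y) ^ 2 := by
  have hreflect : triDens y z x = triDens y z (y + z - x) := by
    simpa [triDens_comm] using (triDens_sub_left (y + z) y z x).symm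
  rw [hreflect, triDens_of_le_midpoint hyz (by linarith) (by linarith)]
  ring

theorem triDens_eq_zero_of_notMem_uIoo (hx : x ∉ uIoo y z) : triDens y z x = 0 := by
  wlog hyz : y ≤ z generalizing y z
  · rw [triDens_comm]
    exact this (by rwa [uIoo_comm]) (le_of_not_ge hyz)
  rw [uIoo_of_le hyz] at hx
  rcases hyz.eq_or_lt with rfl | hlt
  · simp [triDens]
  have hfar : (z - y) / 2 ≤ |x - (y + z) / 2| := by
    by_contra! hnear
    rw [abs_lt] at hnear
    exact hx ⟨by linarith, by linarith⟩
  have hwidth : 0 < z - y := sub_pos.2 hlt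
  have hheight : 1 - 2 / (z - y) * |x - (y + z) / 2| ≤ 0 := by
    rw [sub_nonpos, div_mul_eq_mul_div, one_le_div hwidth]
    linarith
  rw [triDens, abs_sub_comm y z, abs_of_pos hwidth, max_eq_left hheight, mul_zero]

theorem measurable_triDens (x : ℝ) : Measurable fun p : ℝ × ℝ ↦ triDens p.1 p.2 x := by
  unfold triDens
  fun_prop

theorem continuousOn_triDens (y x : ℝ) : ContinuousOn (fun z ↦ triDens y z x) {y}ᶜ := by
  have hwidth : ContinuousOn (fun z ↦ 2 / |y - z|) {y}ᶜ :=
    continuousOn_const.div (by fun_prop) fun z hz ↦ abs_ne_zero.2 (sub_ne_zero.2 (Ne.symm hz))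
  unfold triDens
  fun_prop

theorem intervalIntegrable_triDens (hc : y < c) (hd : y < d) :
    IntervalIntegrable (fun z ↦ triDens y z x) volume c d :=
  ((continuousOn_triDens y x).mono fun _ hz ↦ ((lt_min hc hd).trans_le hz.1).ne').intervalIntegrable

theorem integral_triDens_to_two_mul_sub (hyx : y < x) :
    ∫ z in x..(2 * x - y), triDens y z x = 4 * log 2 - 2 := by
  have hy : y < 2 * x - y := by linarith
  have hdens : EqOn (fun z ↦ triDens y z x)
      (fun z ↦ 4 * (z - y)⁻¹ - 4 * (x - y) * ((z - y) ^ 2)⁻¹) (uIcc x (2 * x - y)) := by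
    intro z hz
    rw [uIcc_of_le (by linarith)] at hz
    have hyz : y < z := hyx.trans_le hz.1
    have hwidth : z - y ≠ 0 := (sub_pos.2 hyz).ne'
    simp only [triDens_of_midpoint_le hyz (by linarith [hz.2]) hz.1]
    field_simp
    ring
  have hxy : x - y ≠ 0 := (sub_pos.2 hyx).ne'
  have htwice : 2 * x - y - y = 2 * (x - y) := by ring
  rw [intervalIntegral.integral_congr hdens, intervalIntegral.integral_sub
      ((intervalIntegrable_inv_sub hyx hy).const_mul _)
      ((intervalIntegrable_inv_sub_sq hyx hy).const_mul _),
    intervalIntegral.integral_const_mul, intervalIntegral.integral_const_mul,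
    integral_inv_sub hyx hy, integral_inv_sub_sq hyx hy, htwice, mul_div_cancel_right₀ _ hxy]
  field_simp
  ring

theorem integral_triDens_from_two_mul_sub (hyx : y < x) (hb : 2 * x - y ≤ b) :
    ∫ z in (2 * x - y)..b, triDens y z x = 2 - 4 * (x - y) * (b - y)⁻¹ := by
  have hy : y < 2 * x - y := by linarith
  have hdens : EqOn (fun z ↦ triDens y z x)
      (fun z ↦ 4 * (x - y) * ((z - y) ^ 2)⁻¹) (uIcc (2 * x - y) b) := by
    intro z hz
    rw [uIcc_of_le hb] at hz
    exact triDens_of_le_midpoint (hy.trans_le hz.1) hyx.le (by linarith [hz.1])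
  have hxy : x - y ≠ 0 := (sub_pos.2 hyx).ne'
  have htwice : 2 * x - y - y = 2 * (x - y) := by ring
  rw [intervalIntegral.integral_congr hdens, intervalIntegral.integral_const_mul,
    integral_inv_sub_sq hy (hy.trans_le hb), htwice]
  field_simp
  ring

theorem integral_triDens (hyx : y < x) (hb : 2 * x - y ≤ b) :
    ∫ z in x..b, triDens y z x = 4 * (log 2 - 1) + 4 * (b - x) * (b - y)⁻¹ := by
  have hy : y < 2 * x - y := by linarith
  have hyb : b - y ≠ 0 := by linarith
  rw [← intervalIntegral.integral_add_adjacent_intervals (intervalIntegrable_triDens hyx hy)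
      (intervalIntegrable_triDens hy (hy.trans_le hb)),
    integral_triDens_to_two_mul_sub hyx, integral_triDens_from_two_mul_sub hyx hb]
  field_simp
  ring

theorem setIntegral_triDens_Ioc (hx : x ≤ (a + b) / 2) (hy : y ∈ Ico a x) :
    ∫ z in Ioc x b, triDens y z x = 4 * (log 2 - 1) + 4 * (b - x) * (b - y)⁻¹ := by
  have hyb : 2 * x - y ≤ b := by linarith [hy.1]
  rw [← integral_triDens hy.2 hyb, intervalIntegral.integral_of_le (by linarith [hy.2])]

theorem integrableOn_triDens (a b x : ℝ) :
    IntegrableOn (fun p : ℝ × ℝ ↦ triDens p.1 p.2 x) (Ico a x ×ˢ Ioc x b) := by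
  wlog hx : x ≤ (a + b) / 2 generalizing b
  · exact (this (2 * x - a) (by linarith)).mono_set
      (prod_mono subset_rfl (Ioc_subset_Ioc_right (by linarith)))
  rcases le_or_gt x a with hxa | hax
  · simp [Ico_eq_empty_of_le hxa]
  have hxb : x < b := by linarith
  rw [IntegrableOn, Measure.volume_eq_prod, ← Measure.prod_restrict,
    integrable_prod_iff (measurable_triDens x).aestronglyMeasurable]
  constructor
  · filter_upwards [ae_restrict_mem measurableSet_Ico] with y hy
    exact (intervalIntegrable_triDens hy.2 (hy.2.trans hxb)).1
  · have hinner : IntegrableOn (fun y ↦ 4 * (log 2 - 1) + 4 * (b - x) * (b - y)⁻¹) (Ico a x) :=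
      (intervalIntegrable_iff_integrableOn_Ico_of_le hax.le).1 (intervalIntegrable_const.add
        ((intervalIntegrable_inv_const_sub (hax.trans hxb) hxb).const_mul _))
    refine hinner.congr_fun (fun y hy ↦ ?_) measurableSet_Ico
    simp only [norm_of_nonneg (triDens_nonneg _ _ _), setIntegral_triDens_Ioc hx hy]

theorem setIntegral_triDens_Ico_prod_Ioc (hax : a ≤ x) (hxb : x < b) (hx : x ≤ (a + b) / 2) :
    ∫ p in Ico a x ×ˢ Ioc x b, triDens p.1 p.2 x =
      -4 * ((b - x) * log ((b - x) / (b - a)) + (x - a) * (1 - log 2)) := by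
  have hab : a < b := hax.trans_lt hxb
  calc ∫ p in Ico a x ×ˢ Ioc x b, triDens p.1 p.2 x
    _ = ∫ y in Ico a x, ∫ z in Ioc x b, triDens y z x :=
      setIntegral_prod _ (integrableOn_triDens a b x)
    _ = ∫ y in Ico a x, (4 * (log 2 - 1) + 4 * (b - x) * (b - y)⁻¹) :=
      setIntegral_congr_fun measurableSet_Ico fun y hy ↦ setIntegral_triDens_Ioc hx hy
    _ = ∫ y in a..x, (4 * (log 2 - 1) + 4 * (b - x) * (b - y)⁻¹) := by
      rw [integral_Ico_eq_integral_Ioc, intervalIntegral.integral_of_le hax]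
    _ = 4 * (log 2 - 1) * (x - a) + 4 * (b - x) * log ((b - a) / (b - x)) := by
      rw [intervalIntegral.integral_add intervalIntegrable_const
          ((intervalIntegrable_inv_const_sub hab hxb).const_mul _),
        intervalIntegral.integral_const, intervalIntegral.integral_const_mul,
        intervalIntegral.integral_comp_sub_left (fun t ↦ t⁻¹),
        integral_inv_of_pos (sub_pos.2 hxb) (sub_pos.2 hab), smul_eq_mul, mul_comm (x - a)]
    _ = -4 * ((b - x) * log ((b - x) / (b - a)) + (x - a) * (1 - log 2)) := by
      rw [← inv_div (b - x), log_inv]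
      ring

theorem setIntegral_triDens_Icc_prod_Icc_eq_two_mul (hx : x ∈ Icc a b) :
    ∫ p in Icc a b ×ˢ Icc a b, triDens p.1 p.2 x =
      2 * ∫ p in Ico a x ×ˢ Ioc x b, triDens p.1 p.2 x := by
  have hsub : Ico a x ×ˢ Ioc x b ∪ Ioc x b ×ˢ Ico a x ⊆ Icc a b ×ˢ Icc a b := by
    have hleft : Ico a x ⊆ Icc a b := Ico_subset_Icc_self.trans (Icc_subset_Icc_right hx.2)
    have hright : Ioc x b ⊆ Icc a b := Ioc_subset_Icc_self.trans (Icc_subset_Icc_left hx.1)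
    exact union_subset (prod_mono hleft hright) (prod_mono hright hleft)
  have hzero : ∀ p ∈ (Icc a b ×ˢ Icc a b) \ (Ico a x ×ˢ Ioc x b ∪ Ioc x b ×ˢ Ico a x),
      triDens p.1 p.2 x = 0 := by
    rintro ⟨y, z⟩ ⟨⟨hy, hz⟩, hp⟩
    refine triDens_eq_zero_of_notMem_uIoo fun hxyz ↦ hp ?_
    grind [uIoo]
  have hdisj : Disjoint (Ico a x) (Ioc x b) :=
    disjoint_left.2 fun _ hy hy' ↦ hy.2.not_gt hy'.1
  rw [setIntegral_eq_of_subset_of_forall_sdiff_eq_zero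
      (measurableSet_Icc.prod measurableSet_Icc) hsub hzero]
  exact setIntegral_prod_union_prod_of_swap_eq (fun p ↦ triDens_comm p.2 p.1 x) measurableSet_Ico
    measurableSet_Ioc hdisj (integrableOn_triDens a b x)

theorem setIntegral_triDens_reflect (a b x : ℝ) :
    ∫ p in Icc a b ×ˢ Icc a b, triDens p.1 p.2 (a + b - x) =
      ∫ p in Icc a b ×ˢ Icc a b, triDens p.1 p.2 x := by
  have hpre : (fun p : ℝ × ℝ ↦ (a + b, a + b) - p) ⁻¹' (Icc a b ×ˢ Icc a b) =
      Icc a b ×ˢ Icc a b := by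
    simp [Icc_prod_Icc, preimage_const_sub_Icc]
  have hreflect := (volume.measurePreserving_sub_left (a + b, a + b)).setIntegral_preimage_emb
    (measurableEmbedding_subLeft _) (fun p ↦ triDens p.1 p.2 (a + b - x)) (Icc a b ×ˢ Icc a b)
  rw [← hreflect, hpre]
  simp only [Prod.fst_sub, Prod.snd_sub, triDens_sub_left]

theorem intensity_density_triangular_general (hab : a < b) (hx : x ∈ Icc a b) :
    (x ≤ (a + b) / 2 →
      ∫ p in Icc a b ×ˢ Icc a b, triDens p.1 p.2 x =
        -8 * ((b - x) * log ((b - x) / (b - a)) + (x - a) * (1 - log 2)))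
    ∧ ((a + b) / 2 ≤ x →
      ∫ p in Icc a b ×ˢ Icc a b, triDens p.1 p.2 x =
        -8 * ((x - a) * log ((x - a) / (b - a)) + (b - x) * (1 - log 2))) := by
  have hleft {t : ℝ} (hat : a ≤ t) (ht : t ≤ (a + b) / 2) :
      ∫ p in Icc a b ×ˢ Icc a b, triDens p.1 p.2 t =
        -8 * ((b - t) * log ((b - t) / (b - a)) + (t - a) * (1 - log 2)) := by
    have htb : t < b := by linarith
    rw [setIntegral_triDens_Icc_prod_Icc_eq_two_mul ⟨hat, htb.le⟩,
      setIntegral_triDens_Ico_prod_Ioc hat htb ht]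
    ring
  refine ⟨hleft hx.1, fun hmid ↦ ?_⟩
  have hb_sub : b - (a + b - x) = x - a := by ring
  have hsub_a : a + b - x - a = b - x := by ring
  rw [← setIntegral_triDens_reflect, hleft (by linarith [hx.2]) (by linarith), hb_sub, hsub_a]

/-- The density of the intensity measure of a random symmetric triangular distribution,
whose endpoints are chosen independently and uniformly from `[0,1]`: for every
`x ∈ [0,1]`, the double integral of `f_{(y,z)}(x)` over `(y,z) ∈ [0,1]²` equals
`−8[(1−x)ln(1−x) + x(1−ln 2)]` for `x ≤ 1/2` and `−8[x ln x + (1−x)(1−ln 2)]` for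
`x ≥ 1/2`. -/
theorem intensity_density_triangular (x : ℝ) (hx : x ∈ Set.Icc (0 : ℝ) 1) :
    (x ≤ 1 / 2 →
      ∫ p in Set.Icc (0 : ℝ) 1 ×ˢ Set.Icc (0 : ℝ) 1, triDens p.1 p.2 x =
        -8 * ((1 - x) * Real.log (1 - x) + x * (1 - Real.log 2)))
    ∧ (1 / 2 ≤ x →
      ∫ p in Set.Icc (0 : ℝ) 1 ×ˢ Set.Icc (0 : ℝ) 1, triDens p.1 p.2 x =
        -8 * (x * Real.log x + (1 - x) * (1 - Real.log 2))) := by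
  simpa using intensity_density_triangular_general zero_lt_one hx
end

section
/- For every x ∈ (0,1), the function (y,z) ↦ (f_{(y,z)}(x))² is not Lebesgue-integrable on [0,1]²; that is, ∫_{[0,1]²} (f_{(y,z)}(x))² d(y,z) = ∞. In particular, the random symmetric triangular distribution with uniformly chosen endpoints has infinite second moment of its density at every interior point. -/
open MeasureTheory Real
open scoped ENNReal

/-!
The integral of `(y, z) ↦ f_{(y,z)}(x)²` is scale invariant around the diagonal point `(x, x)`:
if `x - y` and `z - x` are both comparable to `s`, then `f_{(y,z)}(x)` is at least of order `s⁻¹`,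
while the set of such `(y, z)` has area of order `s²`. Hence these sets carry a mass bounded
away from `0` although they shrink to a point as `s → 0`, which absolute continuity of a finite
integral forbids. Only a neighbourhood of `(x, x)` matters.
-/

open Filter Set Topology

section LIntegral

variable {α ι : Type*} [MeasurableSpace α] {μ : Measure α} {f : α → ℝ≥0∞} {l : Filter ι}
  {s : ι → Set α} {t : Set α} {c : ℝ≥0∞}

lemma setLIntegral_eq_top_of_tendsto_measure_zero [l.NeBot]
    (hs : Tendsto (fun i ↦ μ (s i)) l (𝓝 0)) (hst : ∀ᶠ i in l, s i ⊆ t) (hc : c ≠ 0)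
    (hcs : ∀ᶠ i in l, c ≤ ∫⁻ a in s i, f a ∂μ) : ∫⁻ a in t, f a ∂μ = ∞ := by
  by_contra hfin
  have hs_restrict : Tendsto (fun i ↦ μ.restrict t (s i)) l (𝓝 0) :=
    tendsto_of_tendsto_of_tendsto_of_le_of_le tendsto_const_nhds hs (fun _ ↦ zero_le)
      fun i ↦ Measure.restrict_apply_le t (s i)
  have hzero := tendsto_setLIntegral_zero hfin hs_restrict
  refine hc (nonpos_iff_eq_zero.mp (ge_of_tendsto hzero ?_))
  filter_upwards [hst, hcs] with i hsub hle
  rwa [Measure.restrict_restrict_of_subset hsub]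

end LIntegral

lemma triDens_eq_of_mem_Icc {x y z : ℝ} (hyz : y < z) (hx : x ∈ Icc y z) :
    triDens y z x = 4 * min (x - y) (z - x) / (z - y) ^ 2 := by
  have hw : 0 < z - y := sub_pos.mpr hyz
  have hdist : |x - (y + z) / 2| = (z - y) / 2 - min (x - y) (z - x) := by
    rcases le_total (x - y) (z - x) with h | h
    · rw [min_eq_left h, abs_of_nonpos (by linarith)]; ring
    · rw [min_eq_right h, abs_of_nonneg (by linarith)]; ring
  have hmin : 0 ≤ min (x - y) (z - x) := le_min (sub_nonneg.mpr hx.1) (sub_nonneg.mpr hx.2)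
  have hheight : 1 - 2 / (z - y) * |x - (y + z) / 2| = 2 * min (x - y) (z - x) / (z - y) := by
    rw [hdist]; field_simp; ring
  rw [triDens, abs_sub_comm, abs_of_pos hw, hheight, max_eq_right (by positivity),
    div_mul_div_comm, ← mul_assoc, ← sq (z - y)]
  norm_num

/-- The square of endpoint pairs `(y, z)` whose distances `x - y` and `z - x` to `x` both lie in
`[s/2, s]`. As `s → 0` these squares shrink to `(x, x)` while the mass they receive from the squared
density stays bounded below. -/
def endpointSquare (x s : ℝ) : Set (ℝ × ℝ) :=
  Icc (x - s) (x - s / 2) ×ˢ Icc (x + s / 2) (x + s)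

namespace endpointSquare

variable {x s : ℝ}

lemma measurableSet : MeasurableSet (endpointSquare x s) :=
  measurableSet_Icc.prod measurableSet_Icc

lemma volume_eq : volume (endpointSquare x s) = ENNReal.ofReal (s / 2) ^ 2 := by
  rw [endpointSquare, Measure.volume_eq_prod, Measure.prod_prod, Real.volume_Icc, Real.volume_Icc,
    sq]
  ring_nf

lemma tendsto_volume_zero : Tendsto (fun s ↦ volume (endpointSquare x s)) (𝓝[>] 0) (𝓝 0) := by
  have hcont : Continuous fun s : ℝ ↦ ENNReal.ofReal (s / 2) ^ 2 :=
    (ENNReal.continuous_pow 2).comp (ENNReal.continuous_ofReal.comp (continuous_id.div_const 2))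
  simpa only [volume_eq, zero_div, ENNReal.ofReal_zero, zero_pow two_ne_zero] using
    (hcont.tendsto 0).mono_left nhdsWithin_le_nhds

lemma eventually_subset {t : Set (ℝ × ℝ)} (ht : t ∈ 𝓝 (x, x)) :
    ∀ᶠ s in 𝓝[>] 0, endpointSquare x s ⊆ t := by
  obtain ⟨ε, hε, hεt⟩ := Metric.nhds_basis_closedBall.mem_iff.mp ht
  rw [← closedBall_prod_same, Real.closedBall_eq_Icc] at hεt
  filter_upwards [Ioc_mem_nhdsGT hε] with s ⟨hs, hsε⟩
  exact (Set.prod_mono (Icc_subset_Icc (by linarith) (by linarith))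
    (Icc_subset_Icc (by linarith) (by linarith))).trans hεt

lemma inv_le_triDens (hs : 0 < s) {p : ℝ × ℝ} (hp : p ∈ endpointSquare x s) :
    (2 * s)⁻¹ ≤ triDens p.1 p.2 x := by
  obtain ⟨⟨hy_lower, hy_upper⟩, hz_lower, hz_upper⟩ := hp
  have hw : 0 < p.2 - p.1 := by linarith
  have hw_le : p.2 - p.1 ≤ 2 * s := by linarith
  have hmin : s / 2 ≤ min (x - p.1) (p.2 - x) := le_min (by linarith) (by linarith)
  have hmin_pos : 0 < min (x - p.1) (p.2 - x) := by linarith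
  rw [triDens_eq_of_mem_Icc (by linarith) ⟨by linarith, by linarith⟩]
  calc (2 * s)⁻¹ = 4 * (s / 2) / (2 * s) ^ 2 := by field_simp; norm_num
    _ ≤ 4 * min (x - p.1) (p.2 - x) / (p.2 - p.1) ^ 2 := by gcongr

lemma le_setLIntegral_triDens_sq (hs : 0 < s) :
    ENNReal.ofReal (1 / 16) ≤
      ∫⁻ p in endpointSquare x s, ENNReal.ofReal (triDens p.1 p.2 x ^ 2) := by
  calc ENNReal.ofReal (1 / 16)
      = ENNReal.ofReal ((2 * s)⁻¹ ^ 2) * volume (endpointSquare x s) := by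
        rw [volume_eq, ← ENNReal.ofReal_pow (by positivity), ← ENNReal.ofReal_mul (by positivity)]
        congr 1
        field_simp
        norm_num
    _ = ∫⁻ _ in endpointSquare x s, ENNReal.ofReal ((2 * s)⁻¹ ^ 2) := (setLIntegral_const _ _).symm
    _ ≤ ∫⁻ p in endpointSquare x s, ENNReal.ofReal (triDens p.1 p.2 x ^ 2) :=
        setLIntegral_mono' measurableSet fun _ hp ↦ by
          gcongr
          exact inv_le_triDens hs hp

end endpointSquare

theorem squared_density_not_integrable_general {x : ℝ} {t : Set (ℝ × ℝ)} (ht : t ∈ 𝓝 (x, x)) :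
    ¬ IntegrableOn (fun p : ℝ × ℝ ↦ triDens p.1 p.2 x ^ 2) t
    ∧ ∫⁻ p in t, ENNReal.ofReal (triDens p.1 p.2 x ^ 2) = ∞ := by
  have htop : ∫⁻ p in t, ENNReal.ofReal (triDens p.1 p.2 x ^ 2) = ∞ :=
    setLIntegral_eq_top_of_tendsto_measure_zero endpointSquare.tendsto_volume_zero
      (endpointSquare.eventually_subset ht) (c := ENNReal.ofReal (1 / 16)) (by simp)
      (eventually_mem_nhdsWithin.mono fun _ hs ↦ endpointSquare.le_setLIntegral_triDens_sq hs)
  exact ⟨fun hint ↦ hint.lintegral_lt_top.ne htop, htop⟩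

/-- For every interior point `x ∈ (0,1)`, the squared triangular density
`(y,z) ↦ (f_{(y,z)}(x))²` is not Lebesgue-integrable on `[0,1]²`: its lower integral
is infinite. In particular, the random symmetric triangular distribution with
uniformly chosen endpoints has infinite second moment of its density at every
interior point. -/
theorem squared_density_not_integrable (x : ℝ) (hx : x ∈ Set.Ioo (0 : ℝ) 1) :
    ¬ IntegrableOn (fun p : ℝ × ℝ => (triDens p.1 p.2 x) ^ 2)
        (Set.Icc (0 : ℝ) 1 ×ˢ Set.Icc (0 : ℝ) 1)
    ∧ ∫⁻ p in Set.Icc (0 : ℝ) 1 ×ˢ Set.Icc (0 : ℝ) 1,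
        ENNReal.ofReal ((triDens p.1 p.2 x) ^ 2) = ∞ := by
  exact squared_density_not_integrable_general
    (prod_mem_nhds (Icc_mem_nhds hx.1 hx.2) (Icc_mem_nhds hx.1 hx.2))
end

section
/- Fix γ ∈ (0,1) and δ > 0. Let (y₁,z₁), (y₂,z₂) ∈ [0,1]² satisfy |y₁−z₁| ≥ γ, |y₂−z₂| ≥ γ, |y₁−y₂| ≤ δ and |z₁−z₂| ≤ δ. Then (1/2) ∫₀¹ |f_{(y₁,z₁)}(x) − f_{(y₂,z₂)}(x)| dx ≤ 2δ/γ. In other words, if the coordinates of two vectors shaping restricted symmetric triangular distributions do not differ by more than δ, then the total variation distance between the corresponding measures is at most 2δ/γ. -/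
open MeasureTheory Real

/-!
Triangular densities are the location-scale family of the tent function `x ↦ max 0 (1 - |x|)`,
which is a nonincreasing function of `|x|`. For any such `f`, moving the centre by `d` at scale `h`
costs at most `2 f(0) d / h` in `L¹`: two translates of `f` cross midway between their centres, so
their distance is twice the integral of `f` over an interval of length `d / h`. Shrinking the scale
from `h` to `k` costs at most `2 (1 - k / h) ∫ f`, because `k / h` times the narrow density lies
below the wide one. Perturbing the endpoints by at most `δ` moves the centre and the half-width by
amounts whose *sum* is at most `δ`, and the larger half-width is at least `γ / 2`.
-/

/-- Functions on the line that are nonnegative, symmetric about `0` and nonincreasing away from `0`.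
Symmetry is the case `|x| = |y|` of `le_of_abs_le`. -/
structure SymmUnimodal (f : ℝ → ℝ) : Prop where
  nonneg : ∀ x, 0 ≤ f x
  le_of_abs_le : ∀ ⦃x y⦄, |x| ≤ |y| → f y ≤ f x

/-- The member with centre `m` and scale `h` of the location-scale family of the density `f`;
meaningful for `0 < h` (at `h = 0` it is the zero function). -/
noncomputable def locScale (f : ℝ → ℝ) (m h x : ℝ) : ℝ := h⁻¹ * f ((x - m) / h)

/-- The standard triangular density, centred at `0` with half-width `1`. -/
def tent (x : ℝ) : ℝ := max 0 (1 - |x|)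

theorem setIntegral_Ioi_comp_add_right {E : Type*} [NormedAddCommGroup E] [NormedSpace ℝ E]
    (f : ℝ → E) (a c : ℝ) :
    ∫ x in Set.Ioi a, f (x + c) = ∫ x in Set.Ioi (a + c), f x := by
  have := (measurePreserving_add_right volume c).setIntegral_preimage_emb
    (measurableEmbedding_addRight c) f (Set.Ioi (a + c))
  simpa using this

section LocScale

variable {f : ℝ → ℝ} {h : ℝ}

theorem integrable_locScale (hf : Integrable f) (m : ℝ) (hh : h ≠ 0) :
    Integrable (locScale f m h) :=
  ((hf.comp_div hh).comp_sub_right m).const_mul h⁻¹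

theorem integrable_abs_locScale_sub (hf : Integrable f) (m n : ℝ) {k : ℝ} (hh : h ≠ 0)
    (hk : k ≠ 0) : Integrable fun x ↦ |locScale f m h x - locScale f n k x| :=
  ((integrable_locScale hf m hh).sub (integrable_locScale hf n hk)).abs

theorem integral_locScale (f : ℝ → ℝ) (m : ℝ) (hh : 0 < h) :
    ∫ x, locScale f m h x = ∫ x, f x := by
  simp only [locScale]
  rw [integral_const_mul, integral_sub_right_eq_self (fun x ↦ f (x / h)),
    Measure.integral_comp_div, abs_of_pos hh, smul_eq_mul, inv_mul_cancel_left₀ hh.ne']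

theorem integral_abs_locScale_sub (f : ℝ → ℝ) (m n : ℝ) (hh : 0 < h) :
    ∫ x, |locScale f m h x - locScale f n h x| = ∫ x, |f (x - m / h) - f (x - n / h)| := by
  rw [← integral_locScale (fun x ↦ |f (x - m / h) - f (x - n / h)|) 0 hh]
  congr with x
  simp only [locScale, sub_zero, sub_div]
  rw [← mul_sub, abs_mul, abs_of_pos (inv_pos.2 hh)]

end LocScale

namespace SymmUnimodal

variable {f : ℝ → ℝ} {h k : ℝ}

theorem abs_translate_sub_eq (hf : SymmUnimodal f) (x c : ℝ) :
    |f (x + c) - f (x - c)| = f (|x| - |c|) - f (|x| + |c|) := by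
  have even (t : ℝ) : f (-t) = f t :=
    (hf.le_of_abs_le (abs_neg t).ge).antisymm (hf.le_of_abs_le (abs_neg t).le)
  have far_le_near : f (|x| + |c|) ≤ f (|x| - |c|) :=
    hf.le_of_abs_le <| (abs_sub _ _).trans <| by
      rw [abs_abs, abs_abs]; exact le_abs_self _
  rw [← abs_of_nonneg (sub_nonneg.2 far_le_near)]
  rcases abs_choice x with hx | hx <;> rcases abs_choice c with hc | hc <;> rw [hx, hc]
  · exact abs_sub_comm _ _
  · rw [sub_neg_eq_add, ← sub_eq_add_neg]
  · rw [← neg_add', ← sub_eq_neg_add, ← neg_sub x c, even, even]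
  · rw [neg_sub_neg, ← neg_add, even, ← neg_sub x c, even, abs_sub_comm]

theorem integral_abs_translate_sub_eq (hf : SymmUnimodal f) (hfi : Integrable f) (c : ℝ) :
    ∫ x, |f (x + c) - f (x - c)| = 2 * ∫ x in -|c|..|c|, f x := by
  simp_rw [hf.abs_translate_sub_eq, sub_eq_add_neg |_|]
  rw [integral_comp_abs (f := fun x ↦ f (x + -|c|) - f (x + |c|)),
    integral_sub (hfi.comp_add_right _).integrableOn (hfi.comp_add_right _).integrableOn,
    setIntegral_Ioi_comp_add_right, setIntegral_Ioi_comp_add_right, zero_add, zero_add,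
    intervalIntegral.integral_Ioi_sub_Ioi' hfi.integrableOn hfi.integrableOn]

theorem intervalIntegral_le (hf : SymmUnimodal f) (hfi : Integrable f) {a b : ℝ} (hab : a ≤ b) :
    ∫ x in a..b, f x ≤ (b - a) * f 0 := by
  calc ∫ x in a..b, f x
      ≤ ∫ _ in a..b, f 0 := intervalIntegral.integral_mono hab hfi.intervalIntegrable
        intervalIntegrable_const fun x ↦ hf.le_of_abs_le (by simp)
    _ = (b - a) * f 0 := by simp

theorem integral_abs_translate_sub_le (hf : SymmUnimodal f) (hfi : Integrable f) (a b : ℝ) :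
    ∫ x, |f (x - a) - f (x - b)| ≤ 2 * f 0 * |a - b| := by
  set c := (b - a) / 2 with hc
  have abs_c : 2 * |c| = |a - b| := by
    rw [hc, abs_div, abs_two, abs_sub_comm]; ring
  calc ∫ x, |f (x - a) - f (x - b)|
      = ∫ x, |f (x + c) - f (x - c)| := by
        rw [← integral_sub_right_eq_self (fun x ↦ |f (x + c) - f (x - c)|) ((a + b) / 2)]
        congr with x
        congr 3 <;> ring
    _ = 2 * ∫ x in -|c|..|c|, f x := hf.integral_abs_translate_sub_eq hfi c
    _ ≤ 2 * ((|c| - -|c|) * f 0) := by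
        gcongr
        exact hf.intervalIntegral_le hfi (neg_le_self (abs_nonneg c))
    _ = 2 * f 0 * |a - b| := by rw [← abs_c]; ring

theorem integral_abs_locScale_sub_center_le (hf : SymmUnimodal f) (hfi : Integrable f) (m n : ℝ)
    (hh : 0 < h) :
    ∫ x, |locScale f m h x - locScale f n h x| ≤ 2 * (f 0 * |m - n| / h) := by
  calc ∫ x, |locScale f m h x - locScale f n h x|
      = ∫ x, |f (x - m / h) - f (x - n / h)| := integral_abs_locScale_sub f m n hh
    _ ≤ 2 * f 0 * |m / h - n / h| := hf.integral_abs_translate_sub_le hfi _ _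
    _ = 2 * (f 0 * |m - n| / h) := by rw [← sub_div, abs_div, abs_of_pos hh]; ring

theorem locScale_nonneg (hf : SymmUnimodal f) (m : ℝ) (hh : 0 < h) (x : ℝ) :
    0 ≤ locScale f m h x :=
  mul_nonneg (inv_nonneg.2 hh.le) (hf.nonneg _)

theorem mul_locScale_le (hf : SymmUnimodal f) (m : ℝ) (hk : 0 < k) (hkh : k ≤ h) (x : ℝ) :
    k / h * locScale f m k x ≤ locScale f m h x := by
  have hh : 0 < h := hk.trans_le hkh
  have abs_div_le : |(x - m) / h| ≤ |(x - m) / k| := by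
    rw [abs_div, abs_div, abs_of_pos hh, abs_of_pos hk]; gcongr
  calc k / h * locScale f m k x
      = h⁻¹ * f ((x - m) / k) := by rw [locScale]; field_simp
    _ ≤ locScale f m h x := by
        rw [locScale]; gcongr; exact hf.le_of_abs_le abs_div_le

theorem integral_abs_locScale_sub_scale_le (hf : SymmUnimodal f) (hfi : Integrable f) (m : ℝ)
    (hk : 0 < k) (hkh : k ≤ h) :
    ∫ x, |locScale f m h x - locScale f m k x| ≤ 2 * ((h - k) * (∫ x, f x) / h) := by
  have hh : 0 < h := hk.trans_le hkh
  have ratio_le_one : k / h ≤ 1 := (div_le_one hh).2 hkh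
  have wide := integrable_locScale hfi m hh.ne'
  have narrow := (integrable_locScale hfi m hk.ne').const_mul (1 - 2 * (k / h))
  calc ∫ x, |locScale f m h x - locScale f m k x|
      ≤ ∫ x, (locScale f m h x + (1 - 2 * (k / h)) * locScale f m k x) := by
        refine integral_mono (integrable_abs_locScale_sub hfi m m hh.ne' hk.ne')
          (wide.add narrow) fun x ↦ abs_sub_le_iff.2 ?_
        have below := hf.mul_locScale_le m hk hkh x
        have ratio_mul_le := mul_le_of_le_one_left (hf.locScale_nonneg m hk x) ratio_le_one
        constructor <;> linarith
    _ = 2 * ((h - k) * (∫ x, f x) / h) := by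
        rw [integral_add wide narrow, integral_const_mul, integral_locScale f m hh,
          integral_locScale f m hk]
        field_simp
        ring

theorem half_integral_abs_locScale_sub_le (hf : SymmUnimodal f) (hfi : Integrable f) (m n : ℝ)
    (hh : 0 < h) (hk : 0 < k) :
    (1 / 2) * ∫ x, |locScale f m h x - locScale f n k x| ≤
      (f 0 * |m - n| + |h - k| * ∫ x, f x) / max h k := by
  wlog hkh : k ≤ h generalizing m n h k
  · simpa only [abs_sub_comm, max_comm] using this n m hk hh (le_of_not_ge hkh)
  have center := hf.integral_abs_locScale_sub_center_le hfi m n hh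
  have scale := hf.integral_abs_locScale_sub_scale_le hfi n hk hkh
  have center_int := integrable_abs_locScale_sub hfi m n hh.ne' hh.ne'
  have scale_int := integrable_abs_locScale_sub hfi n n hh.ne' hk.ne'
  have triangle : ∫ x, |locScale f m h x - locScale f n k x| ≤
      (∫ x, |locScale f m h x - locScale f n h x|) +
        ∫ x, |locScale f n h x - locScale f n k x| := by
    rw [← integral_add center_int scale_int]
    exact integral_mono (integrable_abs_locScale_sub hfi m n hh.ne' hk.ne')
      (center_int.add scale_int) fun x ↦ abs_sub_le _ _ _
  rw [max_eq_left hkh, abs_of_nonneg (sub_nonneg.2 hkh), add_div]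
  linarith

end SymmUnimodal

theorem symmUnimodal_tent : SymmUnimodal tent where
  nonneg _ := le_max_left _ _
  le_of_abs_le x y hxy := by unfold tent; gcongr

theorem tent_zero : tent 0 = 1 := by simp [tent]

theorem integrable_tent : Integrable tent := by
  have continuous_tent : Continuous tent := by unfold tent; fun_prop
  refine continuous_tent.integrable_of_hasCompactSupport
    (HasCompactSupport.intro (isCompact_Icc (a := -1) (b := 1)) fun x hx ↦ ?_)
  rw [Set.mem_Icc, ← abs_le, not_le] at hx
  exact max_eq_left (by linarith)

theorem integral_tent : ∫ x, tent x = 1 := by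
  have right_half : ∫ x in Set.Ioi (0 : ℝ), max 0 (1 - x) = 1 / 2 := by
    calc ∫ x in Set.Ioi (0 : ℝ), max 0 (1 - x)
        = ∫ x in Set.Ioc (0 : ℝ) 1, max 0 (1 - x) :=
          setIntegral_eq_of_subset_of_forall_sdiff_eq_zero measurableSet_Ioi
            Set.Ioc_subset_Ioi_self fun x hx ↦ max_eq_left (by grind)
      _ = ∫ x in (0 : ℝ)..1, (1 - x) := by
          rw [intervalIntegral.integral_of_le zero_le_one]
          exact setIntegral_congr_fun measurableSet_Ioc fun x hx ↦
            max_eq_right (sub_nonneg.2 hx.2)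
      _ = 1 / 2 := by
          rw [intervalIntegral.integral_comp_sub_left (fun x ↦ x), integral_id]
          norm_num
  simp only [tent]
  rw [integral_comp_abs (f := fun x ↦ max 0 (1 - x)), right_half]
  norm_num

theorem triDens_eq_locScale_tent (y z : ℝ) :
    triDens y z = locScale tent ((y + z) / 2) (|y - z| / 2) := by
  ext x
  rw [triDens, locScale, tent, inv_div, abs_div, abs_of_nonneg (by positivity : 0 ≤ |y - z| / 2),
    div_div_eq_mul_div, mul_comm |_| (2 : ℝ), ← div_mul_eq_mul_div]

theorem integrable_abs_triDens_sub {y₁ z₁ y₂ z₂ : ℝ} (h₁ : y₁ ≠ z₁) (h₂ : y₂ ≠ z₂) :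
    Integrable fun x ↦ |triDens y₁ z₁ x - triDens y₂ z₂ x| := by
  rw [triDens_eq_locScale_tent, triDens_eq_locScale_tent]
  exact integrable_abs_locScale_sub integrable_tent _ _
    (half_pos (abs_sub_pos.2 h₁)).ne' (half_pos (abs_sub_pos.2 h₂)).ne'

theorem abs_add_add_abs_sub_le {R : Type*} [CommRing R] [LinearOrder R] [IsStrictOrderedRing R]
    {a b δ : R} (ha : |a| ≤ δ) (hb : |b| ≤ δ) :
    |a + b| + |a - b| ≤ 2 * δ := by
  grind

theorem abs_center_sub_add_abs_halfWidth_sub_le {y₁ z₁ y₂ z₂ δ : ℝ} (hy : |y₁ - y₂| ≤ δ)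
    (hz : |z₁ - z₂| ≤ δ) :
    |(y₁ + z₁) / 2 - (y₂ + z₂) / 2| + |(|y₁ - z₁| / 2) - |y₂ - z₂| / 2| ≤ δ := by
  have center : |(y₁ + z₁) / 2 - (y₂ + z₂) / 2| = |(y₁ - y₂) + (z₁ - z₂)| / 2 := by
    rw [← sub_div, abs_div, abs_two, add_sub_add_comm]
  have halfWidth : |(|y₁ - z₁| / 2) - |y₂ - z₂| / 2| ≤ |(y₁ - y₂) - (z₁ - z₂)| / 2 := by
    rw [← sub_div, abs_div, abs_two, sub_sub_sub_comm y₁]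
    exact div_le_div_of_nonneg_right (abs_abs_sub_abs_le _ _) zero_le_two
  linarith [abs_add_add_abs_sub_le hy hz]

theorem half_integral_abs_triDens_sub_le {y₁ z₁ y₂ z₂ δ : ℝ} (h₁ : y₁ ≠ z₁) (h₂ : y₂ ≠ z₂)
    (hy : |y₁ - y₂| ≤ δ) (hz : |z₁ - z₂| ≤ δ) :
    (1 / 2) * ∫ x, |triDens y₁ z₁ x - triDens y₂ z₂ x| ≤
      2 * δ / max |y₁ - z₁| |y₂ - z₂| := by
  have bound := symmUnimodal_tent.half_integral_abs_locScale_sub_le integrable_tent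
    ((y₁ + z₁) / 2) ((y₂ + z₂) / 2) (half_pos (abs_sub_pos.2 h₁)) (half_pos (abs_sub_pos.2 h₂))
  rw [← triDens_eq_locScale_tent, ← triDens_eq_locScale_tent, tent_zero, integral_tent, one_mul,
    mul_one, max_div_div_right zero_le_two, div_div_eq_mul_div, mul_comm _ (2 : ℝ)] at bound
  refine bound.trans ?_
  gcongr
  exact abs_center_sub_add_abs_halfWidth_sub_le hy hz

theorem tv_dist_le_of_close_endpoints_general {γ δ y₁ z₁ y₂ z₂ : ℝ} (s : Set ℝ) (hγ : 0 < γ)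
    (h₁ : y₁ ≠ z₁) (h₂ : y₂ ≠ z₂) (hmax : γ ≤ max |y₁ - z₁| |y₂ - z₂|)
    (hy : |y₁ - y₂| ≤ δ) (hz : |z₁ - z₂| ≤ δ) :
    (1 / 2) * ∫ x in s, |triDens y₁ z₁ x - triDens y₂ z₂ x| ≤ 2 * δ / γ := by
  have hδ : 0 ≤ δ := (abs_nonneg _).trans hy
  calc (1 / 2) * ∫ x in s, |triDens y₁ z₁ x - triDens y₂ z₂ x|
      ≤ (1 / 2) * ∫ x, |triDens y₁ z₁ x - triDens y₂ z₂ x| := by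
        refine mul_le_mul_of_nonneg_left ?_ one_half_pos.le
        exact setIntegral_le_integral (integrable_abs_triDens_sub h₁ h₂)
          (.of_forall fun _ ↦ abs_nonneg _)
    _ ≤ 2 * δ / max |y₁ - z₁| |y₂ - z₂| := half_integral_abs_triDens_sub_le h₁ h₂ hy hz
    _ ≤ 2 * δ / γ := by gcongr

/-- If the coordinates of two endpoint pairs `(y₁,z₁)` and `(y₂,z₂)`, each shaping a
restricted symmetric triangular distribution with parameter `γ`, do not differ by
more than `δ`, then the total variation distance between the corresponding measures
is at most `2δ/γ`. -/
theorem tv_dist_le_of_close_endpoints (γ δ : ℝ) (hγ : γ ∈ Set.Ioo (0 : ℝ) 1)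
    (hδ : 0 < δ) (y₁ z₁ y₂ z₂ : ℝ)
    (hy₁ : y₁ ∈ Set.Icc (0 : ℝ) 1) (hz₁ : z₁ ∈ Set.Icc (0 : ℝ) 1)
    (hy₂ : y₂ ∈ Set.Icc (0 : ℝ) 1) (hz₂ : z₂ ∈ Set.Icc (0 : ℝ) 1)
    (h₁ : γ ≤ |y₁ - z₁|) (h₂ : γ ≤ |y₂ - z₂|)
    (hy : |y₁ - y₂| ≤ δ) (hz : |z₁ - z₂| ≤ δ) :
    (1 / 2) * ∫ x in (0 : ℝ)..1, |triDens y₁ z₁ x - triDens y₂ z₂ x| ≤ 2 * δ / γ := by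
  rw [intervalIntegral.integral_of_le zero_le_one]
  exact tv_dist_le_of_close_endpoints_general _ hγ.1 (abs_sub_pos.1 (hγ.1.trans_le h₁))
    (abs_sub_pos.1 (hγ.1.trans_le h₂)) (le_max_of_le_left h₁) hy hz
end

section
/- Fix γ ∈ (0,1). Then (1−γ)^{−2} · ∫_{{(y,z)∈[0,1]²: |y−z|≥γ}} ( ∫₀¹ (f_{(y,z)}(x))² dx ) d(y,z) = −(8/(3(1−γ)))·(1 + ln(γ)/(1−γ)). That is, the expected initial energy of an agent whose opinion is a random restricted symmetric triangular distribution with parameter γ equals −(8/(3(1−γ)))·(1 + ln(γ)/(1−γ)). -/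
open MeasureTheory Real

/-- The region of admissible endpoint pairs for the restricted triangular
distributions: pairs `(y,z) ∈ [0,1]²` with `|y−z| ≥ γ`. -/
def restrictedRegion (γ : ℝ) : Set (ℝ × ℝ) :=
  {p : ℝ × ℝ | p.1 ∈ Set.Icc (0 : ℝ) 1 ∧ p.2 ∈ Set.Icc (0 : ℝ) 1 ∧ γ ≤ |p.1 - p.2|}

/-!
Every triangular density is a rescaled translate of the tent function `u ↦ max 0 (1 - |u|)`, whose
square has integral `2 / 3`; hence a density with endpoints `y ≠ z` in `[0, 1]` has energy
`4 / (3 * |y - z|)`. The difference of two independent uniform points of `[0, 1]` has density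
`max 0 (1 - |t|)`, so integrating a function `g` of `|y - z|` over the region `γ ≤ |y - z|` gives
`2 * ∫ t in γ..1, (1 - t) * g t`. For `g t = 4 / (3 * t)` this is an elementary
logarithmic integral.
-/

section Difference

theorem setIntegral_prod_comp_sub {G E : Type*} [AddGroup G] [MeasurableSpace G] [MeasurableAdd₂ G]
    [NormedAddCommGroup E] [NormedSpace ℝ E] [CompleteSpace E]
    {μ ν : Measure G} [SFinite μ] [SFinite ν] [μ.IsAddRightInvariant]
    {s t : Set G} (hs : MeasurableSet s) (ht : MeasurableSet t) {f : G → E}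
    (hf : IntegrableOn (fun p : G × G => f (p.1 - p.2)) (s ×ˢ t) (μ.prod ν)) :
    ∫ p in s ×ˢ t, f (p.1 - p.2) ∂μ.prod ν = ∫ u, ν.real (t ∩ (u + ·) ⁻¹' s) • f u ∂μ := by
  let F : G × G → E := (s ×ˢ t).indicator fun p => f (p.1 - p.2)
  have hF_int : Integrable F (μ.prod ν) := (integrable_indicator_iff (hs.prod ht)).2 hf
  have shear : MeasurePreserving (fun p : G × G => (p.1 + p.2, p.2)) (μ.prod ν) (μ.prod ν) :=
    measurePreserving_add_prod μ ν
  have slice (u y : G) : F (u + y, y) = (t ∩ (u + ·) ⁻¹' s).indicator (fun _ => f u) y := by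
    classical simp [F, Set.indicator_apply, and_comm]
  calc ∫ p in s ×ˢ t, f (p.1 - p.2) ∂μ.prod ν
      = ∫ p, F p ∂μ.prod ν := (integral_indicator (hs.prod ht)).symm
    _ = ∫ p, F (p.1 + p.2, p.2) ∂μ.prod ν := by
        conv_lhs => rw [← shear.map_eq]
        exact integral_map shear.aemeasurable
          (shear.map_eq.symm ▸ hF_int.aestronglyMeasurable)
    _ = ∫ u, ∫ y, F (u + y, y) ∂ν ∂μ :=
        integral_prod _ (shear.integrable_comp_of_integrable hF_int)
    _ = ∫ u, ν.real (t ∩ (u + ·) ⁻¹' s) • f u ∂μ := by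
        simp only [slice,
          fun u => integral_indicator_const (μ := ν) (f u) (ht.inter (measurable_const_add u hs))]

theorem volume_real_Icc_inter_preimage_const_add (a b t : ℝ) :
    volume.real (Set.Icc a b ∩ (t + ·) ⁻¹' Set.Icc a b) = max 0 (b - a - |t|) := by
  rw [Set.preimage_const_add_Icc, Set.Icc_inter_Icc, Real.volume_real_Icc]
  rcases le_total 0 t with ht | ht
  · rw [abs_of_nonneg ht, max_eq_left (sub_le_self a ht), min_eq_right (sub_le_self b ht),
      max_comm, sub_right_comm]
  · rw [abs_of_nonpos ht, max_eq_right (by linarith : a ≤ a - t),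
      min_eq_left (by linarith : b ≤ b - t), max_comm]
    ring_nf

theorem setIntegral_Icc_prod_Icc_comp_sub {E : Type*} [NormedAddCommGroup E] [NormedSpace ℝ E]
    [CompleteSpace E] {a b : ℝ} {f : ℝ → E}
    (hf : IntegrableOn (fun p : ℝ × ℝ => f (p.1 - p.2)) (Set.Icc a b ×ˢ Set.Icc a b)) :
    ∫ p in Set.Icc a b ×ˢ Set.Icc a b, f (p.1 - p.2) = ∫ t, max 0 (b - a - |t|) • f t := by
  simp only [← volume_real_Icc_inter_preimage_const_add]
  exact setIntegral_prod_comp_sub measurableSet_Icc measurableSet_Icc hf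

end Difference

section RestrictedRegion

variable {γ : ℝ}

theorem restrictedRegion_eq_inter_preimage :
    restrictedRegion γ =
      (Set.Icc 0 1 ×ˢ Set.Icc 0 1) ∩ (fun p : ℝ × ℝ => |p.1 - p.2|) ⁻¹' Set.Ici γ := by
  ext p
  simp only [restrictedRegion, Set.mem_ofPred_eq, Set.mem_inter_iff, Set.mem_prod, Set.mem_preimage,
    Set.mem_Ici, and_assoc]

theorem isCompact_restrictedRegion : IsCompact (restrictedRegion γ) := by
  rw [restrictedRegion_eq_inter_preimage]
  exact (isCompact_Icc.prod isCompact_Icc).inter_right (isClosed_Ici.preimage (by fun_prop))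

theorem integral_max_one_sub_abs_mul_indicator_Ici (hγ0 : 0 ≤ γ) (hγ1 : γ ≤ 1) (g : ℝ → ℝ) :
    ∫ t, max 0 (1 - |t|) * (Set.Ici γ).indicator g |t| = 2 * ∫ t in γ..1, (1 - t) * g t := by
  have vanish : ∀ t ∈ Set.Ici 0 \ Set.Icc γ 1, max 0 (1 - t) * (Set.Ici γ).indicator g t = 0 := by
    rintro t ⟨-, ht⟩
    rcases lt_or_ge t γ with htγ | htγ
    · rw [Set.indicator_of_notMem (Set.notMem_Ici.2 htγ), mul_zero]
    · have ht1 : 1 < t := not_le.1 fun h => ht ⟨htγ, h⟩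
      rw [max_eq_left (by linarith), zero_mul]
  rw [integral_comp_abs (f := fun t => max 0 (1 - t) * (Set.Ici γ).indicator g t),
    ← integral_Ici_eq_integral_Ioi,
    setIntegral_eq_of_subset_of_forall_sdiff_eq_zero measurableSet_Ici
      (fun t ht => hγ0.trans ht.1) vanish,
    intervalIntegral.integral_of_le hγ1, ← integral_Icc_eq_integral_Ioc]
  congr 1
  refine setIntegral_congr_fun measurableSet_Icc fun t ht => ?_
  rw [max_eq_right (sub_nonneg.2 ht.2), Set.indicator_of_mem (Set.mem_Ici.2 ht.1)]

theorem setIntegral_restrictedRegion_comp_abs_sub (hγ0 : 0 ≤ γ) (hγ1 : γ ≤ 1) {g : ℝ → ℝ}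
    (hg : IntegrableOn (fun p : ℝ × ℝ => g |p.1 - p.2|) (restrictedRegion γ)) :
    ∫ p in restrictedRegion γ, g |p.1 - p.2| = 2 * ∫ t in γ..1, (1 - t) * g t := by
  have measurableSet_le_abs_sub :
      MeasurableSet ((fun p : ℝ × ℝ => |p.1 - p.2|) ⁻¹' Set.Ici γ) :=
    (isClosed_Ici.preimage (by fun_prop)).measurableSet
  have indicator_abs_sub :
      ((fun p : ℝ × ℝ => |p.1 - p.2|) ⁻¹' Set.Ici γ).indicator (fun p => g |p.1 - p.2|) =
        fun p => (Set.Ici γ).indicator g |p.1 - p.2| := rfl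
  rw [restrictedRegion_eq_inter_preimage] at hg ⊢
  rw [IntegrableOn, Set.inter_comm, ← Measure.restrict_restrict measurableSet_le_abs_sub,
    ← IntegrableOn, ← integrable_indicator_iff measurableSet_le_abs_sub, indicator_abs_sub] at hg
  rw [← setIntegral_indicator measurableSet_le_abs_sub, indicator_abs_sub,
    setIntegral_Icc_prod_Icc_comp_sub (f := fun t => (Set.Ici γ).indicator g |t|) hg]
  simp only [sub_zero, smul_eq_mul]
  exact integral_max_one_sub_abs_mul_indicator_Ici hγ0 hγ1 g

end RestrictedRegion

section Energy

theorem integral_max_one_sub_abs_pow (n : ℕ) :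
    ∫ u : ℝ, max 0 (1 - |u|) ^ (n + 1) = 2 / (n + 2) := by
  have vanish : ∀ u ∈ Set.Ioi (0 : ℝ) \ Set.Ioc 0 1, max 0 (1 - u) ^ (n + 1) = 0 := by
    rintro u ⟨hu0, hu⟩
    have hu1 : 1 < u := not_le.1 fun h => hu ⟨hu0, h⟩
    rw [max_eq_left (by linarith), zero_pow n.succ_ne_zero]
  have half : ∫ u in Set.Ioi (0 : ℝ), max 0 (1 - u) ^ (n + 1) = 1 / (n + 2) := by
    calc ∫ u in Set.Ioi (0 : ℝ), max 0 (1 - u) ^ (n + 1)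
        = ∫ u in Set.Ioc (0 : ℝ) 1, max 0 (1 - u) ^ (n + 1) :=
          setIntegral_eq_of_subset_of_forall_sdiff_eq_zero measurableSet_Ioi
            Set.Ioc_subset_Ioi_self vanish
      _ = ∫ u in Set.Ioc (0 : ℝ) 1, (1 - u) ^ (n + 1) :=
          setIntegral_congr_fun measurableSet_Ioc fun u hu => by
            rw [max_eq_right (sub_nonneg.2 hu.2)]
      _ = ∫ u in (0 : ℝ)..1, (1 - u) ^ (n + 1) :=
          (intervalIntegral.integral_of_le zero_le_one).symm
      _ = 1 / (n + 2) := by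
          rw [intervalIntegral.integral_comp_sub_left (fun u => u ^ (n + 1)), integral_pow]
          norm_num [add_assoc]
  rw [integral_comp_abs (f := fun u => max 0 (1 - u) ^ (n + 1)), half]
  ring

variable {y z : ℝ}

theorem triDens_eq_mul_max_one_sub_abs (y z x : ℝ) :
    triDens y z x = 2 / |y - z| * max 0 (1 - |2 / |y - z| * (x - (y + z) / 2)|) := by
  rw [triDens, abs_mul, abs_of_nonneg (by positivity : 0 ≤ 2 / |y - z|)]

theorem support_triDens_subset (hyz : y ≠ z) :
    Function.support (triDens y z) ⊆ Set.Ioo (min y z) (max y z) := by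
  intro x hx
  have hd : 0 < |y - z| := abs_pos.2 (sub_ne_zero.2 hyz)
  have hpos : 0 < 1 - 2 / |y - z| * |x - (y + z) / 2| := by
    by_contra! h
    exact hx (by rw [triDens, max_eq_left h, mul_zero])
  have hdist : |x - (y + z) / 2| < |y - z| / 2 := by
    rw [sub_pos, div_mul_eq_mul_div, div_lt_one hd] at hpos
    linarith
  rw [abs_lt] at hdist
  constructor
  · linarith [hdist.1, min_add_max y z, max_sub_min_eq_abs' y z]
  · linarith [hdist.2, min_add_max y z, max_sub_min_eq_abs' y z]

theorem integral_triDens_pow (hyz : y ≠ z) (n : ℕ) :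
    ∫ x, triDens y z x ^ (n + 1) = (2 / |y - z|) ^ n * (2 / (n + 2)) := by
  have hc : 0 < 2 / |y - z| := div_pos two_pos (abs_pos.2 (sub_ne_zero.2 hyz))
  simp only [triDens_eq_mul_max_one_sub_abs, mul_pow]
  rw [integral_const_mul,
    integral_sub_right_eq_self
      (fun x => max 0 (1 - |2 / |y - z| * x|) ^ (n + 1)) ((y + z) / 2),
    Measure.integral_comp_mul_left (fun u => max 0 (1 - |u|) ^ (n + 1)),
    integral_max_one_sub_abs_pow, abs_of_pos (inv_pos.2 hc), smul_eq_mul, pow_succ]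
  field_simp

theorem integral_zero_one_triDens_sq (hy : y ∈ Set.Icc 0 1) (hz : z ∈ Set.Icc 0 1) (hyz : y ≠ z) :
    ∫ x in (0 : ℝ)..1, triDens y z x ^ 2 = 4 / 3 * |y - z|⁻¹ := by
  have hsupp : Function.support (fun x => triDens y z x ^ 2) ⊆ Set.Ioc 0 1 := by
    rw [Function.support_pow _ two_ne_zero]
    exact (support_triDens_subset hyz).trans <| Set.Ioo_subset_Ioc_self.trans <|
      Set.Ioc_subset_Ioc (le_min hy.1 hz.1) (max_le hy.2 hz.2)
  rw [intervalIntegral.integral_eq_integral_of_support_subset hsupp, integral_triDens_pow hyz 1,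
    pow_one, Nat.cast_one]
  ring

end Energy

theorem integral_one_sub_mul_inv {a b : ℝ} (ha : 0 < a) (hb : 0 < b) :
    ∫ t in a..b, (1 - t) * t⁻¹ = log (b / a) - (b - a) := by
  have hne : ∀ t ∈ Set.uIcc a b, t ≠ 0 := fun t ht => ((lt_min ha hb).trans_le ht.1).ne'
  calc ∫ t in a..b, (1 - t) * t⁻¹
      = ∫ t in a..b, (t⁻¹ - 1) :=
        intervalIntegral.integral_congr fun t ht => by
          have := hne t ht
          field_simp
    _ = log (b / a) - (b - a) := by
        rw [intervalIntegral.integral_sub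
          (intervalIntegral.intervalIntegrable_inv hne continuousOn_id)
          intervalIntegrable_const, integral_inv_of_pos ha hb, integral_one]

/-- The expected initial energy of an agent whose opinion is a random restricted
symmetric triangular distribution with parameter `γ` equals
`−(8/(3(1−γ)))·(1 + ln(γ)/(1−γ))`. -/
theorem expected_energy_restricted_triangular (γ : ℝ) (hγ : γ ∈ Set.Ioo (0 : ℝ) 1) :
    ((1 - γ) ^ 2)⁻¹ *
        ∫ p in restrictedRegion γ, (∫ x in (0 : ℝ)..1, (triDens p.1 p.2 x) ^ 2)
      = -(8 / (3 * (1 - γ))) * (1 + Real.log γ / (1 - γ)) := by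
  obtain ⟨hγ0, hγ1⟩ := hγ
  have sub_ne : ∀ p ∈ restrictedRegion γ, p.1 - p.2 ≠ 0 := fun p hp =>
    abs_pos.1 (hγ0.trans_le hp.2.2)
  have energy : Set.EqOn (fun p : ℝ × ℝ => ∫ x in (0 : ℝ)..1, triDens p.1 p.2 x ^ 2)
      (fun p => 4 / 3 * |p.1 - p.2|⁻¹) (restrictedRegion γ) := fun p hp =>
    integral_zero_one_triDens_sq hp.1 hp.2.1 (sub_ne_zero.1 (sub_ne p hp))
  have integrable : IntegrableOn (fun p : ℝ × ℝ => |p.1 - p.2|⁻¹) (restrictedRegion γ) :=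
    ContinuousOn.integrableOn_compact isCompact_restrictedRegion <|
      ContinuousOn.inv₀ (by fun_prop) fun p hp => abs_ne_zero.2 (sub_ne p hp)
  have hγ_ne : 1 - γ ≠ 0 := (sub_pos.2 hγ1).ne'
  rw [setIntegral_congr_fun isCompact_restrictedRegion.measurableSet energy, integral_const_mul,
    setIntegral_restrictedRegion_comp_abs_sub (g := fun t => t⁻¹) hγ0.le hγ1.le integrable,
    integral_one_sub_mul_inv hγ0 one_pos, one_div, log_inv]
  field_simp
  ring
end

section
/- Fix μ ∈ (0,1/2]. Every SAD-profile achievable from the initial profile δ₀ by finitely many elementary updates is unimodal: there exists a vertex m ∈ ℤ such that the profile is nondecreasing on {v ∈ ℤ : v ≤ m} and nonincreasing on {v ∈ ℤ : v ≥ m}. -/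
/-- The elementary 'Sharing a drink' update on the edge `⟨u, u+1⟩` of `ℤ` with
convergence parameter `μ`. -/
noncomputable def sadUpdate (μ : ℝ) (u : ℤ) (ξ : ℤ → ℝ) : ℤ → ℝ := fun v =>
  if v = u then (1 - μ) * ξ u + μ * ξ (u + 1)
  else if v = u + 1 then μ * ξ u + (1 - μ) * ξ (u + 1)
  else ξ v

/-- The SAD-profile obtained from the initial profile `δ₀` by performing the
elementary updates on the edges listed in `l`, in order. -/
noncomputable def sadProfile (μ : ℝ) (l : List ℤ) : ℤ → ℝ :=
  l.foldl (fun ξ u => sadUpdate μ u ξ) (fun v => if v = 0 then 1 else 0)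

/-!
Moving the value at a single vertex to a point between itself and the value at a neighbour keeps a
profile unimodal: away from the mode the vertex stays between its two neighbours, and lowering the
value at the mode either leaves the mode in place or shifts it to the other neighbour. An elementary
update on `⟨u, u+1⟩` is two such moves: first `ξ u` moves towards `ξ (u + 1)`, and then `ξ (u + 1)`
moves towards the new value at `u`, which it does not pass because `μ ≤ 1/2`.
-/

open Function Set OrderDual

section Update

variable {ι α : Type*} [DecidableEq ι] {ξ : ι → α} {s : Set ι} {v : ι} {c : α}

theorem eqOn_update_of_notMem (hv : v ∉ s) : EqOn ξ (update ξ v c) s := fun _ hx =>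
  (update_of_ne (ne_of_mem_of_not_mem hx hv) _ _).symm

variable [PartialOrder ι] [Preorder α]

theorem monotoneOn_update (hξ : MonotoneOn ξ (s \ {v}))
    (hlt : ∀ a ∈ s, a < v → ξ a ≤ c) (hgt : ∀ b ∈ s, v < b → c ≤ ξ b) :
    MonotoneOn (update ξ v c) s := by
  intro a ha b hb hab
  rcases hab.eq_or_lt with rfl | hlt_ab
  · exact le_rfl
  rcases eq_or_ne a v with rfl | hav
  · rw [update_self, update_of_ne hlt_ab.ne']
    exact hgt b hb hlt_ab
  rw [update_of_ne hav]
  rcases eq_or_ne b v with rfl | hbv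
  · rw [update_self]
    exact hlt a ha hlt_ab
  · rw [update_of_ne hbv]
    exact hξ ⟨ha, hav⟩ ⟨hb, hbv⟩ hab

theorem antitoneOn_update (hξ : AntitoneOn ξ (s \ {v}))
    (hlt : ∀ a ∈ s, a < v → c ≤ ξ a) (hgt : ∀ b ∈ s, v < b → ξ b ≤ c) :
    AntitoneOn (update ξ v c) s :=
  monotoneOn_update (α := αᵒᵈ) hξ.dual_right hlt hgt

end Update

/-- A function on an ordered set is unimodal if it is nondecreasing up to some point `m`, its mode,
and nonincreasing from there on. The mode has to be attained: a strictly monotone function on `ℤ` is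
not unimodal. -/
def IsUnimodal {ι α : Type*} [Preorder ι] [Preorder α] (ξ : ι → α) : Prop :=
  ∃ m, MonotoneOn ξ (Iic m) ∧ AntitoneOn ξ (Ici m)

theorem isUnimodal_ite_eq {ι α : Type*} [PartialOrder ι] [DecidableEq ι] [Preorder α]
    (i : ι) {b c : α} (hbc : b ≤ c) : IsUnimodal fun j => if j = i then c else b := by
  have heq : (fun j => if j = i then c else b) = update (fun _ => b) i c :=
    funext fun j => (update_apply (fun _ => b) i c j).symm
  rw [heq]
  exact ⟨i,
    monotoneOn_update monotoneOn_const (fun _ _ _ => hbc) fun _ hb hib => (hb.not_gt hib).elim,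
    antitoneOn_update antitoneOn_const (fun _ ha hai => (ha.not_gt hai).elim) fun _ _ _ => hbc⟩

theorem IsUnimodal.comp_ofDual {ι α : Type*} [Preorder ι] [Preorder α] {ξ : ι → α}
    (hξ : IsUnimodal ξ) : IsUnimodal (ξ ∘ ofDual) :=
  let ⟨m, hmono, hanti⟩ := hξ
  ⟨toDual m, hanti.dual_left, hmono.dual_left⟩

section CovBy

variable {ι α : Type*} [LinearOrder ι] [LinearOrder α] {ξ : ι → α} {u v w m : ι} {c : α}

theorem isUnimodal_update_of_lt_mode (hmono : MonotoneOn ξ (Iic m)) (hanti : AntitoneOn ξ (Ici m))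
    (hvm : v < m) (hvw : v ⋖ w) (hc : c ∈ uIcc (ξ v) (ξ w)) : IsUnimodal (update ξ v c) := by
  have hwm : w ≤ m := hvw.ge_of_gt hvm
  rw [uIcc_of_le (hmono hvm.le hwm hvw.le)] at hc
  refine ⟨m, monotoneOn_update (hmono.mono sdiff_subset) (fun a ha hav => ?_) fun b hb hvb => ?_,
    hanti.congr (eqOn_update_of_notMem hvm.not_ge)⟩
  · exact (hmono ha hvm.le hav.le).trans hc.1
  · exact hc.2.trans (hmono hwm hb (hvw.ge_of_gt hvb))

theorem isUnimodal_update_of_mode_lt (hmono : MonotoneOn ξ (Iic m)) (hanti : AntitoneOn ξ (Ici m))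
    (hmv : m < v) (hvw : v ⋖ w) (hc : c ∈ uIcc (ξ v) (ξ w)) : IsUnimodal (update ξ v c) := by
  have hmw : m ≤ w := hmv.le.trans hvw.le
  rw [uIcc_of_ge (hanti hmv.le hmw hvw.le)] at hc
  refine ⟨m, hmono.congr (eqOn_update_of_notMem hmv.not_ge),
    antitoneOn_update (hanti.mono sdiff_subset) (fun a ha hav => ?_) fun b hb hvb => ?_⟩
  · exact hc.2.trans (hanti ha hmv.le hav.le)
  · exact (hanti hmw hb (hvw.ge_of_gt hvb)).trans hc.1

theorem isUnimodal_update_mode (hmono : MonotoneOn ξ (Iic v)) (hanti : AntitoneOn ξ (Ici v))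
    (huv : u ⋖ v) (hvw : v ⋖ w) (hc : c ∈ uIcc (ξ v) (ξ w)) : IsUnimodal (update ξ v c) := by
  rw [uIcc_of_ge (hanti self_mem_Ici hvw.le hvw.le)] at hc
  have hright : ∀ b, v < b → ξ b ≤ c := fun b hvb =>
    (hanti hvw.le hvb.le (hvw.ge_of_gt hvb)).trans hc.1
  rcases le_total (ξ u) c with huc | hcu
  · refine ⟨v, monotoneOn_update (hmono.mono sdiff_subset) (fun a ha hav => ?_) fun b hb hvb => ?_,
      antitoneOn_update (hanti.mono sdiff_subset) (fun a ha hav => ?_) fun b _ => hright b⟩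
    · exact (hmono ha huv.le (huv.le_of_lt hav)).trans huc
    · exact (hb.not_gt hvb).elim
    · exact (ha.not_gt hav).elim
  · refine ⟨u, (hmono.mono (Iic_subset_Iic.2 huv.le)).congr (eqOn_update_of_notMem huv.lt.not_ge),
      antitoneOn_update ?_ (fun a ha hav => ?_) fun b _ => hright b⟩
    · have hsub : Ici u \ {v} ⊆ insert u (Ioi v) := fun x ⟨hux, hxv⟩ =>
        hux.eq_or_lt'.imp_right fun hlt => (huv.ge_of_gt hlt).lt_of_ne' hxv
      refine (antitoneOn_insert_iff.2 ⟨fun b hvb hbu => ?_, fun b hvb _ => ?_, ?_⟩).mono hsub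
      · exact ((huv.lt.trans hvb).not_ge hbu).elim
      · exact (hright b hvb).trans hcu
      · exact hanti.mono Ioi_subset_Ici_self
    · rwa [(huv.le_of_lt hav).antisymm ha]

theorem IsUnimodal.update_of_mem_uIcc_right (hξ : IsUnimodal ξ) (huv : u ⋖ v) (hvw : v ⋖ w)
    (hc : c ∈ uIcc (ξ v) (ξ w)) : IsUnimodal (update ξ v c) := by
  obtain ⟨m, hmono, hanti⟩ := hξ
  rcases lt_trichotomy v m with hvm | rfl | hmv
  · exact isUnimodal_update_of_lt_mode hmono hanti hvm hvw hc
  · exact isUnimodal_update_mode hmono hanti huv hvw hc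
  · exact isUnimodal_update_of_mode_lt hmono hanti hmv hvw hc

theorem IsUnimodal.update_of_mem_uIcc_left (hξ : IsUnimodal ξ) (huv : u ⋖ v) (hvw : v ⋖ w)
    (hc : c ∈ uIcc (ξ v) (ξ u)) : IsUnimodal (update ξ v c) :=
  (hξ.comp_ofDual.update_of_mem_uIcc_right hvw.toDual huv.toDual hc).comp_ofDual

end CovBy

theorem sadUpdate_eq_update_update (μ : ℝ) (u : ℤ) (ξ : ℤ → ℝ) :
    sadUpdate μ u ξ =
      update (update ξ u ((1 - μ) * ξ u + μ * ξ (u + 1))) (u + 1)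
        (μ * ξ u + (1 - μ) * ξ (u + 1)) := by
  ext v
  simp only [sadUpdate, update_apply]
  split_ifs <;> first | rfl | omega

section ConvexCombination

variable {𝕜 : Type*} [Field 𝕜] [LinearOrder 𝕜] [IsStrictOrderedRing 𝕜] {μ : 𝕜}

theorem one_sub_mul_add_mul_mem_uIcc (hμ : μ ∈ Icc 0 1) (a b : 𝕜) :
    (1 - μ) * a + μ * b ∈ uIcc a b := by
  rw [← segment_eq_uIcc]
  exact ⟨1 - μ, μ, sub_nonneg.2 hμ.2, hμ.1, sub_add_cancel 1 μ, rfl⟩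

theorem mul_add_one_sub_mul_mem_uIcc (hμ : μ ∈ Icc 0 (1 / 2)) (a b : 𝕜) :
    μ * a + (1 - μ) * b ∈ uIcc b ((1 - μ) * a + μ * b) := by
  have hpos : 0 < 1 - μ := by linarith [hμ.2]
  have hratio : μ / (1 - μ) ∈ Icc 0 1 :=
    ⟨div_nonneg hμ.1 hpos.le, (div_le_one hpos).2 (by linarith [hμ.2])⟩
  convert one_sub_mul_add_mul_mem_uIcc hratio b ((1 - μ) * a + μ * b) using 1
  field

end ConvexCombination

theorem IsUnimodal.sadUpdate {μ : ℝ} (hμ : μ ∈ Icc 0 (1 / 2)) {ξ : ℤ → ℝ} (hξ : IsUnimodal ξ)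
    (u : ℤ) : IsUnimodal (sadUpdate μ u ξ) := by
  have hμ_one : μ ∈ Icc 0 1 := Icc_subset_Icc_right (by norm_num) hμ
  rw [sadUpdate_eq_update_update]
  refine (hξ.update_of_mem_uIcc_right (Order.sub_one_covBy u) (Order.covBy_add_one u)
    (one_sub_mul_add_mul_mem_uIcc hμ_one _ _)).update_of_mem_uIcc_left (Order.covBy_add_one u)
    (Order.covBy_add_one (u + 1)) ?_
  rw [update_self, update_of_ne (Order.covBy_add_one u).ne']
  exact mul_add_one_sub_mul_mem_uIcc hμ _ _

theorem sadProfile_unimodal_general {μ : ℝ} (hμ : μ ∈ Icc 0 (1 / 2)) {ξ : ℤ → ℝ}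
    (hξ : IsUnimodal ξ) (l : List ℤ) :
    IsUnimodal (l.foldl (fun ξ u => sadUpdate μ u ξ) ξ) :=
  l.foldlRecOn _ hξ fun _ hη u _ => hη.sadUpdate hμ u

/-- Every achievable SAD-profile is unimodal: there is a vertex `m` such that the
profile is nondecreasing to the left of `m` and nonincreasing to the right of `m`. -/
theorem sadProfile_unimodal (μ : ℝ) (hμ : μ ∈ Set.Ioc (0 : ℝ) (1 / 2)) (l : List ℤ) :
    ∃ m : ℤ,
      (∀ v w : ℤ, v ≤ w → w ≤ m → sadProfile μ l v ≤ sadProfile μ l w)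
      ∧ (∀ v w : ℤ, m ≤ v → v ≤ w → sadProfile μ l w ≤ sadProfile μ l v) := by
  obtain ⟨m, hmono, hanti⟩ : IsUnimodal (sadProfile μ l) :=
    sadProfile_unimodal_general (Ioc_subset_Icc_self hμ) (isUnimodal_ite_eq 0 zero_le_one) l
  exact ⟨m, fun v w hvw hwm => hmono (hvw.trans hwm) hwm hvw,
    fun v w hmv hvw => hanti hmv (hmv.trans hvw) hvw⟩
end

section
/- Fix μ ∈ (0,1/2]. Let ξ be an SAD-profile obtained from the initial profile δ₀ by a finite sequence of elementary updates none of which is performed on the edge ⟨−1,0⟩ (so vertex 0 only shares to the right). Then vertex 0 remains a mode of the profile: ξ(0) ≥ ξ(v) for every v ∈ ℤ. -/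
/-!
Water never crosses the edge `⟨-1, 0⟩`, so the negative half-line stays empty. On the nonnegative
half-line the profile stays nonincreasing: an update moves the two values it touches towards each
other, and for `μ ≤ 1/2` it does not exchange their order. Hence the value at `0` is maximal.
-/

theorem antitoneOn_pi_single {ι α : Type*} [PartialOrder ι] [DecidableEq ι] [Preorder α] [Zero α]
    (i : ι) {x : α} (hx : 0 ≤ x) : AntitoneOn (Pi.single i x : ι → α) (Set.Ici i) := by
  intro j hj k _ hjk
  rcases eq_or_ne k i with rfl | hk
  · rw [le_antisymm hjk hj]
  · have hnonneg : (0 : ι → α) ≤ Pi.single i x := Pi.single_nonneg.2 hx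
    rw [Pi.single_eq_of_ne hk]
    exact hnonneg j

section

variable {μ : ℝ} {u v : ℤ} {ξ : ℤ → ℝ} {s : Set ℤ} {l : List ℤ}

theorem sadUpdate_left (μ : ℝ) (u : ℤ) (ξ : ℤ → ℝ) :
    sadUpdate μ u ξ u = (1 - μ) * ξ u + μ * ξ (u + 1) := by
  simp [sadUpdate]

theorem sadUpdate_right (μ : ℝ) (u : ℤ) (ξ : ℤ → ℝ) :
    sadUpdate μ u ξ (u + 1) = μ * ξ u + (1 - μ) * ξ (u + 1) := by
  simp [sadUpdate]

theorem sadUpdate_of_ne (μ : ℝ) (ξ : ℤ → ℝ) (hleft : v ≠ u) (hright : v ≠ u + 1) :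
    sadUpdate μ u ξ v = ξ v := by
  simp [sadUpdate, hleft, hright]

theorem mapsTo_sadUpdate {C : Set ℝ} (hC : ∀ x ∈ C, ∀ y ∈ C, (1 - μ) * x + μ * y ∈ C)
    (hu : u ∈ s ↔ u + 1 ∈ s) (hξ : Set.MapsTo ξ s C) : Set.MapsTo (sadUpdate μ u ξ) s C := by
  intro v hv
  rcases eq_or_ne v u with rfl | hleft
  · rw [sadUpdate_left]
    exact hC _ (hξ hv) _ (hξ (hu.1 hv))
  rcases eq_or_ne v (u + 1) with rfl | hright
  · rw [sadUpdate_right, add_comm]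
    exact hC _ (hξ hv) _ (hξ (hu.2 hv))
  · rw [sadUpdate_of_ne μ ξ hleft hright]
    exact hξ hv

theorem sadUpdate_mem_Icc (hμ : μ ∈ Set.Icc (0 : ℝ) 1) (hξ : ξ (u + 1) ≤ ξ u)
    (hv : v = u ∨ v = u + 1) : sadUpdate μ u ξ v ∈ Set.Icc (ξ (u + 1)) (ξ u) := by
  obtain ⟨hμ_nonneg, hμ_le⟩ := hμ
  obtain rfl | rfl := hv
  · rw [sadUpdate_left]
    constructor <;> nlinarith
  · rw [sadUpdate_right]
    constructor <;> nlinarith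

theorem sadUpdate_right_le_left (hμ : μ ≤ 1 / 2) (hξ : ξ (u + 1) ≤ ξ u) :
    sadUpdate μ u ξ (u + 1) ≤ sadUpdate μ u ξ u := by
  rw [sadUpdate_left, sadUpdate_right]
  nlinarith

theorem antitoneOn_sadUpdate_of_mem (hμ : μ ∈ Set.Icc (0 : ℝ) (1 / 2)) (hleft : u ∈ s)
    (hright : u + 1 ∈ s) (hξ : AntitoneOn ξ s) : AntitoneOn (sadUpdate μ u ξ) s := by
  have hedge : ξ (u + 1) ≤ ξ u := hξ hleft hright (by lia)
  have hbetween {v : ℤ} (hv : v = u ∨ v = u + 1) :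
      sadUpdate μ u ξ v ∈ Set.Icc (ξ (u + 1)) (ξ u) :=
    sadUpdate_mem_Icc ⟨hμ.1, by linarith [hμ.2]⟩ hedge hv
  have hoff {v : ℤ} (hv : ¬(v = u ∨ v = u + 1)) : sadUpdate μ u ξ v = ξ v :=
    sadUpdate_of_ne μ ξ (fun h => hv (.inl h)) (fun h => hv (.inr h))
  intro v hv w hw hvw
  by_cases hv_edge : v = u ∨ v = u + 1 <;> by_cases hw_edge : w = u ∨ w = u + 1
  · obtain rfl | hlt := hvw.eq_or_lt
    · exact le_rfl
    · obtain ⟨rfl, rfl⟩ : v = u ∧ w = u + 1 := by lia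
      exact sadUpdate_right_le_left hμ.2 hedge
  · rw [hoff hw_edge]
    exact (hξ hright hw (by lia)).trans (hbetween hv_edge).1
  · rw [hoff hv_edge]
    exact (hbetween hw_edge).2.trans (hξ hv hleft (by lia))
  · rw [hoff hv_edge, hoff hw_edge]
    exact hξ hv hw hvw

theorem antitoneOn_sadUpdate (hμ : μ ∈ Set.Icc (0 : ℝ) (1 / 2)) (hu : u ∈ s ↔ u + 1 ∈ s)
    (hξ : AntitoneOn ξ s) : AntitoneOn (sadUpdate μ u ξ) s := by
  by_cases hus : u ∈ s
  · exact antitoneOn_sadUpdate_of_mem hμ hus (hu.1 hus) hξ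
  · exact hξ.congr fun v hv => (sadUpdate_of_ne μ ξ (ne_of_mem_of_not_mem hv hus)
      (ne_of_mem_of_not_mem hv (mt hu.2 hus))).symm

theorem sadProfile_induction {P : (ℤ → ℝ) → Prop} (init : P (Pi.single 0 1))
    (update : ∀ ξ, P ξ → ∀ u ∈ l, P (sadUpdate μ u ξ)) : P (sadProfile μ l) := by
  have hinit : (fun v : ℤ => if v = 0 then (1 : ℝ) else 0) = Pi.single 0 1 := by
    ext v
    rw [Pi.single_apply]
  rw [sadProfile, hinit]
  exact List.foldlRecOn l _ init update

theorem mapsTo_sadProfile {C : Set ℝ} (hC : ∀ x ∈ C, ∀ y ∈ C, (1 - μ) * x + μ * y ∈ C)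
    (hl : ∀ u ∈ l, (u ∈ s ↔ u + 1 ∈ s)) (hinit : Set.MapsTo (Pi.single 0 1) s C) :
    Set.MapsTo (sadProfile μ l) s C :=
  sadProfile_induction (P := (Set.MapsTo · s C)) hinit fun _ hξ u hu =>
    mapsTo_sadUpdate hC (hl u hu) hξ

theorem sadProfile_nonneg (hμ : μ ∈ Set.Icc (0 : ℝ) 1) (l : List ℤ) (v : ℤ) :
    0 ≤ sadProfile μ l v := by
  have hC : ∀ x ∈ Set.Ici (0 : ℝ), ∀ y ∈ Set.Ici (0 : ℝ), (1 - μ) * x + μ * y ∈ Set.Ici 0 :=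
    fun x hx y hy => add_nonneg (mul_nonneg (sub_nonneg.2 hμ.2) hx) (mul_nonneg hμ.1 hy)
  have hinit : (0 : ℤ → ℝ) ≤ Pi.single 0 1 := Pi.single_nonneg.2 zero_le_one
  exact mapsTo_sadProfile hC (by simp) (fun w _ => hinit w) (Set.mem_univ v)

theorem sadProfile_eq_zero (μ : ℝ) (hl : ∀ u ∈ l, (u ∈ s ↔ u + 1 ∈ s)) (hs : 0 ∉ s) (hv : v ∈ s) :
    sadProfile μ l v = 0 :=
  mapsTo_sadProfile (C := {0}) (by simp) hl
    (fun _ hw => Pi.single_eq_of_ne (ne_of_mem_of_not_mem hw hs) 1) hv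

theorem antitoneOn_sadProfile (hμ : μ ∈ Set.Icc (0 : ℝ) (1 / 2))
    (hl : ∀ u ∈ l, (u ∈ s ↔ u + 1 ∈ s)) (hs : s ⊆ Set.Ici 0) :
    AntitoneOn (sadProfile μ l) s :=
  sadProfile_induction (P := (AntitoneOn · s)) ((antitoneOn_pi_single 0 zero_le_one).mono hs)
    fun _ hξ u hu => antitoneOn_sadUpdate hμ (hl u hu) hξ

end

/-- If no update is ever performed on the edge `⟨−1,0⟩`, i.e. vertex `0` only shares
the water to the right, then vertex `0` remains a mode of the SAD-profile. -/
theorem sadProfile_zero_mode (μ : ℝ) (hμ : μ ∈ Set.Ioc (0 : ℝ) (1 / 2))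
    (l : List ℤ) (hl : (-1 : ℤ) ∉ l) :
    ∀ v : ℤ, sadProfile μ l v ≤ sadProfile μ l 0 := by
  intro v
  rcases lt_or_ge v 0 with hv | hv
  · have hIio : ∀ u ∈ l, (u ∈ Set.Iio (0 : ℤ) ↔ u + 1 ∈ Set.Iio (0 : ℤ)) := by grind
    rw [sadProfile_eq_zero μ hIio Set.self_notMem_Iio hv]
    exact sadProfile_nonneg ⟨hμ.1.le, by linarith [hμ.2]⟩ l 0
  · have hIci : ∀ u ∈ l, (u ∈ Set.Ici (0 : ℤ) ↔ u + 1 ∈ Set.Ici (0 : ℤ)) := by grind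
    exact antitoneOn_sadProfile ⟨hμ.1.le, hμ.2⟩ hIci subset_rfl Set.self_mem_Ici hv hv
end

section
/- Fix μ ∈ (0,1/2] and a vertex w ∈ ℤ. The supremum, over all SAD-profiles ξ achievable from the initial profile δ₀ by finitely many elementary updates, of the value ξ(w) equals 1/(d+1), where d = |w| is the graph distance on ℤ between 0 and w. -/
/-!
Follow the tail sums `S k = ∑_{j ≥ k} ξ j` instead of the profile `ξ`: an update on `⟨u, u + 1⟩`
replaces `S (u + 1)` by an average of `S u`, `S (u + 1)`, `S (u + 2)`. Such an average fixes affine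
functions and creates no new sign changes, so `S` keeps crossing each decreasing line of height at
least `1` at the origin at most once, from below to above, as the initial step function does. If
`ξ d > 1 / (d + 1)`, the line of slope `-1 / (d + 1)` passing just below `S d` and just above
`S (d + 1)` has height more than `1` at the origin and is crossed in the wrong direction.

Conversely, an update on `⟨u, u + 1⟩` raises the centre of mass by `μ (ξ u - ξ (u + 1))`. Using only
edges inside `[0, d]` and bringing the centre of mass close to its supremum, `ξ` becomes almost
nondecreasing on `[0, d]`, where its total mass is `1`, so `ξ d` is almost at least the mean
`1 / (d + 1)`.
-/

theorem sadProfile_concat (μ : ℝ) (l : List ℤ) (u : ℤ) :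
    sadProfile μ (l ++ [u]) = sadUpdate μ u (sadProfile μ l) := by
  simp [sadProfile]

theorem sadUpdate_eq_add_smul (μ : ℝ) (u : ℤ) (ξ : ℤ → ℝ) :
    sadUpdate μ u ξ =
      ξ + (μ * (ξ u - ξ (u + 1))) • (Pi.single (u + 1) 1 - Pi.single u 1) := by
  ext v
  simp only [sadUpdate, Pi.add_apply, Pi.smul_apply, Pi.sub_apply, Pi.single_apply, smul_eq_mul]
  grind

theorem sadUpdate_comp_neg (μ : ℝ) (u : ℤ) (ξ : ℤ → ℝ) :
    sadUpdate μ (-u - 1) (ξ ∘ Neg.neg) = sadUpdate μ u ξ ∘ Neg.neg := by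
  ext v
  simp only [sadUpdate, Function.comp_apply]
  grind

theorem sadProfile_map_neg_sub_one (μ : ℝ) (l : List ℤ) :
    sadProfile μ (l.map fun u => -u - 1) = sadProfile μ l ∘ Neg.neg := by
  induction l using List.reverseRecOn with
  | nil =>
    ext v
    simp [sadProfile]
  | append_singleton l u ih =>
    rw [List.map_append, List.map_singleton, sadProfile_concat, sadProfile_concat, ih,
      sadUpdate_comp_neg]

theorem iSup_sadProfile_neg (μ : ℝ) (w : ℤ) :
    ⨆ l, sadProfile μ l (-w) = ⨆ l, sadProfile μ l w := by
  have reflection_involutive : Function.Involutive fun u : ℤ => -u - 1 := fun u => by ring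
  rw [← (List.map_surjective_iff.2 reflection_involutive.surjective).iSup_comp]
  simp only [sadProfile_map_neg_sub_one, Function.comp_apply, neg_neg]

/-- The effect of `sadUpdate μ u` on the tail sums `S k = ∑_{j ≥ k} ξ j` of a profile `ξ`: only the
tail starting at the right endpoint `u + 1` of the edge changes. -/
def tailUpdate (μ : ℝ) (u : ℤ) (S : ℤ → ℝ) : ℤ → ℝ :=
  Function.update S (u + 1) ((1 - 2 * μ) * S (u + 1) + μ * (S u + S (u + 2)))

/-- The tail sums `k ↦ ∑_{j ≥ k} ξ j` of the profile `ξ = sadProfile μ l`, defined through their own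
recursion so that no infinite sum is needed. -/
noncomputable def sadTail (μ : ℝ) (l : List ℤ) : ℤ → ℝ :=
  l.foldl (fun S u => tailUpdate μ u S) ((Set.Iic 0).indicator 1)

theorem sadTail_concat (μ : ℝ) (l : List ℤ) (u : ℤ) :
    sadTail μ (l ++ [u]) = tailUpdate μ u (sadTail μ l) := by
  simp [sadTail]

theorem sadUpdate_sub_shift (μ : ℝ) (u : ℤ) (S : ℤ → ℝ) :
    sadUpdate μ u (fun k => S k - S (k + 1)) =
      fun k => tailUpdate μ u S k - tailUpdate μ u S (k + 1) := by
  ext k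
  simp only [sadUpdate, tailUpdate, Function.update_apply]
  grind

theorem sadProfile_eq_sadTail_sub (μ : ℝ) (l : List ℤ) :
    sadProfile μ l = fun k => sadTail μ l k - sadTail μ l (k + 1) := by
  induction l using List.reverseRecOn with
  | nil =>
    ext k
    simp only [sadProfile, sadTail, List.foldl_nil, Set.indicator_apply, Set.mem_Iic, Pi.one_apply]
    grind
  | append_singleton l u ih => rw [sadProfile_concat, sadTail_concat, ih, sadUpdate_sub_shift]

theorem tailUpdate_sub_affine (μ : ℝ) (u : ℤ) (S : ℤ → ℝ) (a s : ℝ) :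
    tailUpdate μ u (fun k => S k - (a - s * k)) = fun k => tailUpdate μ u S k - (a - s * k) := by
  ext k
  simp only [tailUpdate, Function.update_apply]
  split_ifs with hk
  · subst hk
    push_cast
    ring
  · rfl

theorem tailUpdate_apply_mem_of_convex {μ : ℝ} (hμ : μ ∈ Set.Icc 0 (1 / 2)) {K : Set ℝ}
    (hK : Convex ℝ K) {S : ℤ → ℝ} {u : ℤ} (left : S u ∈ K) (middle : S (u + 1) ∈ K)
    (right : S (u + 2) ∈ K) : tailUpdate μ u S (u + 1) ∈ K := by
  obtain ⟨μ_nonneg, μ_le⟩ := hμ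
  have midpoint_mem : (1 / 2 : ℝ) • S u + (1 / 2 : ℝ) • S (u + 2) ∈ K :=
    hK left right (by norm_num) (by norm_num) (by norm_num)
  have average_mem : (1 - 2 * μ) • S (u + 1) +
      (2 * μ) • ((1 / 2 : ℝ) • S u + (1 / 2 : ℝ) • S (u + 2)) ∈ K :=
    hK middle midpoint_mem (by linarith) (by linarith) (by ring)
  convert average_mem using 1
  simp only [tailUpdate, Function.update_self, smul_eq_mul]
  ring

theorem sadTail_mem_Icc {μ : ℝ} (hμ : μ ∈ Set.Icc 0 (1 / 2)) (l : List ℤ) (k : ℤ) :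
    sadTail μ l k ∈ Set.Icc 0 1 := by
  induction l using List.reverseRecOn generalizing k with
  | nil =>
    simp only [sadTail, List.foldl_nil, Set.indicator_apply, Pi.one_apply]
    split_ifs <;> norm_num
  | append_singleton l u ih =>
    rw [sadTail_concat]
    rcases eq_or_ne k (u + 1) with rfl | hk
    · exact tailUpdate_apply_mem_of_convex hμ (convex_Icc 0 1) (ih _) (ih _) (ih _)
    · simpa only [tailUpdate, Function.update_of_ne hk] using ih k

theorem abs_sadProfile_le_one {μ : ℝ} (hμ : μ ∈ Set.Icc 0 (1 / 2)) (l : List ℤ) (v : ℤ) :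
    |sadProfile μ l v| ≤ 1 := by
  rw [sadProfile_eq_sadTail_sub]
  obtain ⟨tail_nonneg, tail_le⟩ := sadTail_mem_Icc hμ l v
  obtain ⟨next_nonneg, next_le⟩ := sadTail_mem_Icc hμ l (v + 1)
  exact abs_sub_le_of_nonneg_of_le tail_nonneg tail_le next_nonneg next_le

/-- A sequence that crosses zero at most once, and then from below to above: after a positive value
there is no negative one. Zeros are allowed on both sides of the crossing. -/
def CrossesUpward (f : ℤ → ℝ) : Prop :=
  ∀ ⦃i j⦄, i ≤ j → 0 < f i → 0 ≤ f j

theorem crossesUpward_tailUpdate {μ : ℝ} (hμ : μ ∈ Set.Icc 0 (1 / 2)) {f : ℤ → ℝ}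
    (hf : CrossesUpward f) (u : ℤ) : CrossesUpward (tailUpdate μ u f) := by
  have apply_of_ne {k : ℤ} (hk : k ≠ u + 1) : tailUpdate μ u f k = f k :=
    Function.update_of_ne hk _ _
  intro i j hij f_pos
  rcases eq_or_ne i (u + 1) with rfl | hi <;> rcases eq_or_ne j (u + 1) with rfl | hj
  · exact f_pos.le
  · rw [apply_of_ne hj]
    by_contra! f_neg
    have f_nonpos {k : ℤ} (hk : k ≤ j) : f k ≤ 0 := by
      by_contra! hfk
      exact f_neg.not_ge (hf hk hfk)
    exact f_pos.not_ge <| tailUpdate_apply_mem_of_convex hμ (convex_Iic 0)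
      (f_nonpos (by lia)) (f_nonpos hij) (f_nonpos (by lia))
  · rw [apply_of_ne hi] at f_pos
    exact tailUpdate_apply_mem_of_convex hμ (convex_Ici 0)
      (hf (by lia) f_pos) (hf hij f_pos) (hf (by lia) f_pos)
  · rw [apply_of_ne hi] at f_pos
    rw [apply_of_ne hj]
    exact hf hij f_pos

theorem crossesUpward_sadTail_sub_line {μ : ℝ} (hμ : μ ∈ Set.Icc 0 (1 / 2)) (l : List ℤ)
    {a s : ℝ} (ha : 1 ≤ a) (hs : 0 ≤ s) :
    CrossesUpward fun k => sadTail μ l k - (a - s * k) := by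
  induction l using List.reverseRecOn with
  | nil =>
    intro i j hij above_line
    simp only [sadTail, List.foldl_nil, Set.indicator_apply, Set.mem_Iic, Pi.one_apply]
      at above_line ⊢
    have i_pos : 0 < i := by
      by_contra! i_nonpos
      have slope_mul_nonpos : s * (i : ℝ) ≤ 0 :=
        mul_nonpos_of_nonneg_of_nonpos hs (by exact_mod_cast i_nonpos)
      rw [if_pos i_nonpos] at above_line
      linarith
    have line_le : s * (i : ℝ) ≤ s * j := by gcongr
    rw [if_neg i_pos.not_ge] at above_line
    rw [if_neg (i_pos.trans_le hij).not_ge]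
    linarith
  | append_singleton l u ih =>
    rw [sadTail_concat, ← tailUpdate_sub_affine]
    exact crossesUpward_tailUpdate hμ ih u

theorem sadProfile_natCast_le {μ : ℝ} (hμ : μ ∈ Set.Icc 0 (1 / 2)) (l : List ℤ) (d : ℕ) :
    sadProfile μ l d ≤ 1 / ((d : ℝ) + 1) := by
  by_contra! gap
  set s : ℝ := 1 / ((d : ℝ) + 1)
  have s_mul : s * ((d : ℝ) + 1) = 1 := one_div_mul_cancel (by positivity)
  rw [sadProfile_eq_sadTail_sub] at gap
  have tail_nonneg := (sadTail_mem_Icc hμ l (d + 1)).1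
  obtain ⟨c, tail_lt, lt_tail⟩ : ∃ c, sadTail μ l (d + 1) < c ∧ c < sadTail μ l d - s :=
    exists_between (by linarith)
  have crossing := crossesUpward_sadTail_sub_line hμ l (a := 1 + c) (s := s)
    (by linarith) (by positivity) (Int.le_add_one (le_refl (d : ℤ)))
  push_cast at crossing
  linarith [crossing (by linarith)]

theorem sum_mul_sadUpdate (μ : ℝ) {A : Finset ℤ} {u : ℤ} (hu : u ∈ A) (hu' : u + 1 ∈ A)
    (g ξ : ℤ → ℝ) :
    ∑ v ∈ A, g v * sadUpdate μ u ξ v =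
      ∑ v ∈ A, g v * ξ v + μ * (ξ u - ξ (u + 1)) * (g (u + 1) - g u) := by
  simp only [sadUpdate_eq_add_smul, Pi.add_apply, Pi.smul_apply, Pi.sub_apply, Pi.single_apply,
    smul_eq_mul, mul_add, mul_sub, mul_ite, mul_one, mul_zero, Finset.sum_add_distrib,
    Finset.sum_sub_distrib, Finset.sum_ite_eq', hu, hu', if_true]
  ring

theorem sum_sadProfile_eq_one (μ : ℝ) {A : Finset ℤ} (zero_mem : 0 ∈ A) {l : List ℤ}
    (hl : ∀ u ∈ l, u ∈ A ∧ u + 1 ∈ A) : ∑ v ∈ A, sadProfile μ l v = 1 := by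
  induction l using List.reverseRecOn with
  | nil => simpa [sadProfile] using zero_mem
  | append_singleton l u ih =>
    obtain ⟨hu, hu'⟩ := hl u (by simp)
    have mass_conserved := sum_mul_sadUpdate μ hu hu' 1 (sadProfile μ l)
    simp only [Pi.one_apply, one_mul, sub_self, mul_zero, add_zero] at mass_conserved
    rw [sadProfile_concat, mass_conserved, ih fun v hv => hl v (by simp [hv])]

theorem exists_forall_sadProfile_sub_le {μ : ℝ} (hμ : μ ∈ Set.Ioc 0 (1 / 2)) (A : Finset ℤ)
    {δ : ℝ} (hδ : 0 < δ) :
    ∃ l : List ℤ, (∀ u ∈ l, u ∈ A ∧ u + 1 ∈ A) ∧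
      ∀ u ∈ A, u + 1 ∈ A → sadProfile μ l u - sadProfile μ l (u + 1) ≤ δ := by
  let moment (l : List ℤ) : ℝ := ∑ v ∈ A, (v : ℝ) * sadProfile μ l v
  let moments : Set ℝ := moment '' {l | ∀ u ∈ l, u ∈ A ∧ u + 1 ∈ A}
  have bounded : BddAbove moments := by
    refine ⟨∑ v ∈ A, |(v : ℝ)|, ?_⟩
    rintro _ ⟨l, -, rfl⟩
    refine Finset.sum_le_sum fun v _ => (le_abs_self _).trans ?_
    rw [abs_mul]
    exact mul_le_of_le_one_right (abs_nonneg _)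
      (abs_sadProfile_le_one (Set.Ioc_subset_Icc_self hμ) l v)
  obtain ⟨_, ⟨l, hl, rfl⟩, near_sup⟩ := exists_lt_of_lt_csSup
    (⟨_, [], by simp, rfl⟩ : moments.Nonempty) (sub_lt_self _ (mul_pos hμ.1 hδ))
  refine ⟨l, hl, fun u hu hu' => le_of_mul_le_mul_left ?_ hμ.1⟩
  have moment_concat :
      moment (l ++ [u]) = moment l + μ * (sadProfile μ l u - sadProfile μ l (u + 1)) := by
    simp only [moment, sadProfile_concat, sum_mul_sadUpdate μ hu hu' (fun v => (v : ℝ))]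
    push_cast
    ring
  have moment_le : moment (l ++ [u]) ≤ sSup moments :=
    le_csSup bounded ⟨_, by simpa [or_imp, forall_and, hu, hu'] using hl, rfl⟩
  linarith

theorem sum_Icc_le_mul_of_sub_le {ξ : ℤ → ℝ} {d : ℕ} {δ : ℝ} (hδ : 0 ≤ δ)
    (hξ : ∀ u ∈ Finset.Icc (0 : ℤ) d, u + 1 ∈ Finset.Icc (0 : ℤ) d → ξ u - ξ (u + 1) ≤ δ) :
    ∑ v ∈ Finset.Icc (0 : ℤ) d, ξ v ≤ (d + 1) * (ξ d + d * δ) := by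
  have tilted_monotone : MonotoneOn (fun v : ℤ => ξ v + v * δ) (Finset.Icc (0 : ℤ) d) := by
    refine monotoneOn_of_le_add_one (by simpa using Set.ordConnected_Icc) fun u _ hu hu' => ?_
    have step := hξ u hu hu'
    push_cast
    linarith
  have le_last : ∀ v ∈ Finset.Icc (0 : ℤ) d, ξ v ≤ ξ d + d * δ := by
    intro v hv
    obtain ⟨v_nonneg, v_le⟩ := Finset.mem_Icc.1 hv
    have tilted_le := tilted_monotone hv (by simp) v_le
    have tilt_nonneg : 0 ≤ (v : ℝ) * δ := mul_nonneg (by exact_mod_cast v_nonneg) hδ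
    push_cast at tilted_le
    linarith
  simpa [mul_add] using Finset.sum_le_card_nsmul _ _ _ le_last

theorem exists_lt_sadProfile_natCast {μ : ℝ} (hμ : μ ∈ Set.Ioc 0 (1 / 2)) (d : ℕ) {c : ℝ}
    (hc : c < 1 / ((d : ℝ) + 1)) : ∃ l, c < sadProfile μ l d := by
  have d_add_one_pos : (0 : ℝ) < d + 1 := by positivity
  obtain ⟨δ, δ_pos, δ_lt⟩ : ∃ δ > 0, d * δ < 1 / ((d : ℝ) + 1) - c := by
    simpa [mul_comm] using exists_pos_mul_lt (sub_pos.2 hc) (d : ℝ)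
  obtain ⟨l, hl, almost_monotone⟩ :=
    exists_forall_sadProfile_sub_le hμ (Finset.Icc (0 : ℤ) d) δ_pos
  have mass_le := sum_Icc_le_mul_of_sub_le δ_pos.le almost_monotone
  rw [sum_sadProfile_eq_one μ (by simp) hl, ← div_le_iff₀' d_add_one_pos] at mass_le
  exact ⟨l, by linarith⟩

theorem iSup_sadProfile_natCast {μ : ℝ} (hμ : μ ∈ Set.Ioc 0 (1 / 2)) (d : ℕ) :
    ⨆ l, sadProfile μ l d = 1 / ((d : ℝ) + 1) :=
  ciSup_eq_of_forall_le_of_forall_lt_exists_gt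
    (fun l => sadProfile_natCast_le (Set.Ioc_subset_Icc_self hμ) l d)
    fun _ hc => exists_lt_sadProfile_natCast hμ d hc

/-- The supremum over all achievable SAD-profiles of the value at a vertex `w`
equals `1/(d+1)`, where `d = |w|` is the graph distance between `0` and `w`. -/
theorem sadProfile_sup_at_vertex (μ : ℝ) (hμ : μ ∈ Set.Ioc (0 : ℝ) (1 / 2)) (w : ℤ) :
    (⨆ l : List ℤ, sadProfile μ l w) = 1 / ((w.natAbs : ℝ) + 1) := by
  rw [← iSup_sadProfile_natCast hμ]
  rcases w.natAbs_eq with hw | hw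
  · rw [← hw]
  · conv_lhs => rw [hw, iSup_sadProfile_neg]
end

section
/- Fix μ ∈ (0,1/2], θ > 0, N ≥ 2, and let X be a real normed vector space. Let x : {1,…,N} → X satisfy ‖x(u+1) − x(u)‖ ≤ θ/2 for all 1 ≤ u ≤ N−1. Apply elementary updates in repeated left-to-right sweeps, i.e. in the order ⟨1,2⟩, ⟨2,3⟩, …, ⟨N−1,N⟩, ⟨1,2⟩, ⟨2,3⟩, …, where an update on ⟨u,u+1⟩ replaces (x(u), x(u+1)) by ((1−μ)x(u)+μx(u+1), μx(u)+(1−μ)x(u+1)). Then after every finite number of such elementary updates, the configuration y obtained satisfies ‖y(u+1) − y(u)‖ ≤ θ for all 1 ≤ u ≤ N−1. -/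
/-- The elementary pairwise `μ`-averaging update on the edge `⟨u, u+1⟩` for a
configuration of points in a real normed vector space `X`. -/
noncomputable def pairUpdate {X : Type*} [NormedAddCommGroup X] [NormedSpace ℝ X]
    (μ : ℝ) (u : ℕ) (x : ℕ → X) : ℕ → X := fun v =>
  if v = u then (1 - μ) • x u + μ • x (u + 1)
  else if v = u + 1 then μ • x u + (1 - μ) • x (u + 1)
  else x v

/-- The configuration after `k` elementary updates, performed in repeated
left-to-right sweeps over the edges `⟨1,2⟩, ⟨2,3⟩, …, ⟨N−1,N⟩, ⟨1,2⟩, …`: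
the `k`-th update (counting from `0`) is on the edge `⟨k % (N−1) + 1, k % (N−1) + 2⟩`. -/
noncomputable def sweepSeq {X : Type*} [NormedAddCommGroup X] [NormedSpace ℝ X]
    (μ : ℝ) (N : ℕ) (x₀ : ℕ → X) : ℕ → ℕ → X
  | 0 => x₀
  | k + 1 => pairUpdate μ (k % (N - 1) + 1) (sweepSeq μ N x₀ k)

/-!
In terms of the differences `d u = x (u + 1) - x u`, an update on the edge `⟨e, e + 1⟩` multiplies
`d e` by `1 - 2 * μ` and adds `μ • d e` to both neighboring differences. If all differences are at
most `(1 - μ) * C` initially, then just before each update the difference across the edge about to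
be updated is at most `C`, the one across the preceding edge is at most `(1 - 2 * μ) * C`, and all
others are at most `(1 - μ) * C`. The update preserves this pattern, moved one edge to the right,
because `(1 - 2 * μ) * C + μ * C = (1 - μ) * C` and `(1 - μ) * C + μ * C = C`. At the end of a sweep
no edge with bound `C` is left, so the next sweep starts as the first one did. The choice
`(1 - μ) * C = θ / 2` gives `C ≤ θ`, since `μ ≤ 1 / 2`.
-/

section PairUpdate

variable {X : Type*} [NormedAddCommGroup X] [NormedSpace ℝ X] (μ : ℝ) (e : ℕ) (x : ℕ → X)

lemma pairUpdate_self : pairUpdate μ e x e = (1 - μ) • x e + μ • x (e + 1) :=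
  if_pos rfl

lemma pairUpdate_succ : pairUpdate μ e x (e + 1) = μ • x e + (1 - μ) • x (e + 1) := by
  simp [pairUpdate]

variable {e} in
lemma pairUpdate_of_ne {v : ℕ} (hv : v ≠ e) (hv' : v ≠ e + 1) : pairUpdate μ e x v = x v := by
  simp [pairUpdate, hv, hv']

lemma pairUpdate_succ_sub_self :
    pairUpdate μ e x (e + 1) - pairUpdate μ e x e = (1 - 2 * μ) • (x (e + 1) - x e) := by
  rw [pairUpdate_succ, pairUpdate_self]
  module

lemma pairUpdate_sub_pred :
    pairUpdate μ (e + 1) x (e + 1) - pairUpdate μ (e + 1) x e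
      = (x (e + 1) - x e) + μ • (x (e + 1 + 1) - x (e + 1)) := by
  rw [pairUpdate_self, pairUpdate_of_ne μ x (v := e) (by lia) (by lia)]
  module

lemma pairUpdate_add_two_sub_succ :
    pairUpdate μ e x (e + 1 + 1) - pairUpdate μ e x (e + 1)
      = (x (e + 1 + 1) - x (e + 1)) + μ • (x (e + 1) - x e) := by
  rw [pairUpdate_succ, pairUpdate_of_ne μ x (v := e + 1 + 1) (by lia) (by lia)]
  module

end PairUpdate

/-- The invariant profile of a left-to-right sweep: the bound on the difference across the edge
`⟨u, u + 1⟩` that holds just before the edge `⟨e, e + 1⟩` is updated. The preceding edge is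
singled out by `u + 1 = e`, so that there is none for `e = 0`. -/
def sweepProfile (μ C : ℝ) (e u : ℕ) : ℝ :=
  if u + 1 = e then (1 - 2 * μ) * C else if u = e then C else (1 - μ) * C

section SweepProfile

variable {μ C : ℝ} {e u : ℕ}

lemma sweepProfile_self : sweepProfile μ C e e = C := by
  simp [sweepProfile]

lemma sweepProfile_succ_self : sweepProfile μ C (e + 1) e = (1 - 2 * μ) * C :=
  if_pos rfl

lemma sweepProfile_of_ne (hpred : u + 1 ≠ e) (hself : u ≠ e) :
    sweepProfile μ C e u = (1 - μ) * C := by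
  simp [sweepProfile, hpred, hself]

lemma sweepProfile_le (hμ : 0 ≤ μ) (hC : 0 ≤ C) : sweepProfile μ C e u ≤ C := by
  have hμC : 0 ≤ μ * C := mul_nonneg hμ hC
  unfold sweepProfile
  split_ifs <;> linarith

lemma sweepProfile_le_of_ne (hμ : 0 ≤ μ) (hC : 0 ≤ C) (hself : u ≠ e) :
    sweepProfile μ C e u ≤ (1 - μ) * C := by
  have hμC : 0 ≤ μ * C := mul_nonneg hμ hC
  rw [sweepProfile, if_neg hself]
  split_ifs <;> linarith

lemma le_sweepProfile_of_succ_ne (hμ : 0 ≤ μ) (hC : 0 ≤ C) (hpred : u + 1 ≠ e) :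
    (1 - μ) * C ≤ sweepProfile μ C e u := by
  have hμC : 0 ≤ μ * C := mul_nonneg hμ hC
  rw [sweepProfile, if_neg hpred]
  split_ifs <;> linarith

end SweepProfile

/-- The invariant of the sweeping procedure: on the set `S` of edges, where `u` stands for
`⟨u, u + 1⟩`, the differences of neighboring values of `x` obey the profile that should hold just
before the edge `e` is updated. -/
def IsSweepBounded {X : Type*} [NormedAddCommGroup X] (μ C : ℝ) (S : Set ℕ) (e : ℕ)
    (x : ℕ → X) : Prop :=
  ∀ u ∈ S, ‖x (u + 1) - x u‖ ≤ sweepProfile μ C e u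

namespace IsSweepBounded

variable {X : Type*} [NormedAddCommGroup X] {μ C : ℝ} {S : Set ℕ} {e : ℕ} {x : ℕ → X}

lemma of_forall_norm_le (hμ : 0 ≤ μ) (hC : 0 ≤ C) (he : ∀ u ∈ S, u + 1 ≠ e)
    (hx : ∀ u ∈ S, ‖x (u + 1) - x u‖ ≤ (1 - μ) * C) : IsSweepBounded μ C S e x :=
  fun u hu ↦ (hx u hu).trans (le_sweepProfile_of_succ_ne hμ hC (he u hu))

lemma restart {e' : ℕ} (h : IsSweepBounded μ C S e x) (hμ : 0 ≤ μ) (hC : 0 ≤ C) (he : e ∉ S)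
    (he' : ∀ u ∈ S, u + 1 ≠ e') : IsSweepBounded μ C S e' x :=
  of_forall_norm_le hμ hC he' fun u hu ↦
    (h u hu).trans (sweepProfile_le_of_ne hμ hC (ne_of_mem_of_not_mem hu he))

protected lemma pairUpdate [NormedSpace ℝ X] (h : IsSweepBounded μ C S e x)
    (hμ : μ ∈ Set.Icc 0 (1 / 2)) (he : e ∈ S) :
    IsSweepBounded μ C S (e + 1) (pairUpdate μ e x) := by
  obtain ⟨hμ₀, hμ₁⟩ := hμ
  have hcurrent : ‖x (e + 1) - x e‖ ≤ C := by simpa only [sweepProfile_self] using h e he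
  have hnorm_add (v : X) : ‖v + μ • (x (e + 1) - x e)‖ ≤ ‖v‖ + μ * C :=
    calc ‖v + μ • (x (e + 1) - x e)‖
        ≤ ‖v‖ + μ * ‖x (e + 1) - x e‖ := by
          simpa only [norm_smul_of_nonneg hμ₀] using norm_add_le v (μ • (x (e + 1) - x e))
      _ ≤ ‖v‖ + μ * C := by gcongr
  intro u hu
  have hold := h u hu
  by_cases hself : u = e
  · subst hself
    rw [pairUpdate_succ_sub_self, sweepProfile_succ_self, norm_smul_of_nonneg (by linarith)]
    exact mul_le_mul_of_nonneg_left hcurrent (by linarith)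
  by_cases hnext : u = e + 1
  · subst hnext
    rw [sweepProfile_of_ne (by lia) (by lia)] at hold
    rw [pairUpdate_add_two_sub_succ, sweepProfile_self]
    linarith [hnorm_add (x (e + 1 + 1) - x (e + 1))]
  rw [sweepProfile_of_ne (by lia) hnext]
  by_cases hpred : u + 1 = e
  · subst hpred
    rw [sweepProfile_succ_self] at hold
    rw [pairUpdate_sub_pred]
    linarith [hnorm_add (x (u + 1) - x u)]
  · rw [pairUpdate_of_ne μ x hpred (by lia), pairUpdate_of_ne μ x hself hnext]
    rwa [sweepProfile_of_ne hpred hself] at hold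

end IsSweepBounded

section SweepSeq

variable {X : Type*} [NormedAddCommGroup X] [NormedSpace ℝ X] {μ : ℝ} {N : ℕ} {x₀ : ℕ → X}

lemma isSweepBounded_sweepSeq {C : ℝ} (hμ : μ ∈ Set.Icc 0 (1 / 2)) (hC : 0 ≤ C) (hN : 2 ≤ N)
    (hinit : ∀ u ∈ Set.Icc 1 (N - 1), ‖x₀ (u + 1) - x₀ u‖ ≤ (1 - μ) * C) (k : ℕ) :
    IsSweepBounded μ C (Set.Icc 1 (N - 1)) (k % (N - 1) + 1) (sweepSeq μ N x₀ k) := by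
  have hfirst : ∀ u ∈ Set.Icc 1 (N - 1), u + 1 ≠ 0 + 1 := fun u hu ↦ by grind
  induction k with
  | zero =>
    rw [Nat.zero_mod]
    exact .of_forall_norm_le hμ.1 hC hfirst hinit
  | succ k ih =>
    have hlt : k % (N - 1) < N - 1 := Nat.mod_lt k (by lia)
    have hupdated : IsSweepBounded μ C (Set.Icc 1 (N - 1)) (k % (N - 1) + 1 + 1)
        (sweepSeq μ N x₀ (k + 1)) :=
      ih.pairUpdate hμ ⟨by lia, hlt⟩
    rw [← Nat.mod_add_mod]
    obtain hinside | hlast := (Nat.add_one_le_of_lt hlt).lt_or_eq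
    · rwa [Nat.mod_eq_of_lt hinside]
    · rw [hlast, Nat.mod_self]
      exact hupdated.restart hμ.1 hC (by grind) hfirst

lemma norm_sweepSeq_succ_sub_le {B : ℝ} (hμ : μ ∈ Set.Icc 0 (1 / 2))
    (hinit : ∀ u ∈ Set.Icc 1 (N - 1), ‖x₀ (u + 1) - x₀ u‖ ≤ B) (k : ℕ) {u : ℕ}
    (hu : u ∈ Set.Icc 1 (N - 1)) :
    ‖sweepSeq μ N x₀ k (u + 1) - sweepSeq μ N x₀ k u‖ ≤ B / (1 - μ) := by
  have hpos : 0 < 1 - μ := by linarith [hμ.2]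
  have hC : 0 ≤ B / (1 - μ) := div_nonneg ((norm_nonneg _).trans (hinit u hu)) hpos.le
  have hN : 2 ≤ N := by grind
  have hinit' : ∀ v ∈ Set.Icc 1 (N - 1), ‖x₀ (v + 1) - x₀ v‖ ≤ (1 - μ) * (B / (1 - μ)) := by
    rwa [mul_div_cancel₀ B hpos.ne']
  exact (isSweepBounded_sweepSeq hμ hC hN hinit' k u hu).trans (sweepProfile_le hμ.1 hC)

end SweepSeq

/-- If neighboring opinions on the section `{1,…,N}` initially differ by at most
`θ/2`, then after every finite number of elementary updates performed in repeated
left-to-right sweeps, all neighboring differences remain at most `θ`. -/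
theorem sweeps_keep_neighbors_close {X : Type*} [NormedAddCommGroup X] [NormedSpace ℝ X]
    (μ : ℝ) (hμ : μ ∈ Set.Ioc (0 : ℝ) (1 / 2)) (θ : ℝ) (hθ : 0 < θ)
    (N : ℕ) (hN : 2 ≤ N) (x₀ : ℕ → X)
    (hinit : ∀ u : ℕ, 1 ≤ u → u ≤ N - 1 → ‖x₀ (u + 1) - x₀ u‖ ≤ θ / 2) :
    ∀ k : ℕ, ∀ u : ℕ, 1 ≤ u → u ≤ N - 1 →
      ‖sweepSeq μ N x₀ k (u + 1) - sweepSeq μ N x₀ k u‖ ≤ θ := by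
  intro k u hu₁ hu₂
  calc ‖sweepSeq μ N x₀ k (u + 1) - sweepSeq μ N x₀ k u‖
      ≤ θ / 2 / (1 - μ) :=
        norm_sweepSeq_succ_sub_le (Set.Ioc_subset_Icc_self hμ) (fun v hv ↦ hinit v hv.1 hv.2) k
          ⟨hu₁, hu₂⟩
    _ ≤ θ / 2 / (1 / 2) := by gcongr; linarith [hμ.2]
    _ = θ := by ring
end

section
/- Fix μ ∈ (0,1/2] and N ≥ 1, and let X be a real normed vector space. Define the sweep map S : X^N → X^N by applying, successively for u = 1, …, N−1, the replacement of (x(u), x(u+1)) by ((1−μ)x(u)+μx(u+1), μx(u)+(1−μ)x(u+1)). Then for every x ∈ X^N and every coordinate v ∈ {1,…,N}, the iterates satisfy (S^k x)(v) → (1/N)·∑_{u=1}^N x(u) as k → ∞. In particular, repeated left-to-right sweeps bring all coordinates arbitrarily close to the (preserved) mean of the initial configuration. -/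
open Filter

/-- The sweep map: one left-to-right sweep of elementary `μ`-averaging updates over
the edges `⟨1,2⟩, ⟨2,3⟩, …, ⟨N−1,N⟩` of the path with vertices `1,…,N`. -/
noncomputable def sweep {X : Type*} [NormedAddCommGroup X] [NormedSpace ℝ X]
    (μ : ℝ) (N : ℕ) (x : ℕ → X) : ℕ → X :=
  (List.range (N - 1)).foldl (fun y i => pairUpdate μ (i + 1) y) x

/-!
In a sweep the point `x 1` is handed along the path: every coordinate of `S x` has the form
`w • x 1 + (1 - w) • c` with the same weight `w = (min μ (1 - μ)) ^ (N - 1) > 0` and some `c` in the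
convex hull of `x 1, …, x N`. Hence `S` multiplies the diameter of the configuration by at most
`1 - w < 1`, while it preserves the mean, which lies within that diameter of every coordinate.
-/

open Set Metric
open scoped Pointwise

section ShrinkToward

variable {𝕜 E : Type*} [Field 𝕜] [AddCommGroup E] [Module 𝕜 E] {C : Set E} {p : E}

/-- The set `C` contracted towards the point `p` by the factor `1 - w`, that is, the set of points
`w • p + (1 - w) • c` with `c ∈ C`. It records that a point carries weight at least `w` on `p`. -/
def shrinkToward (p : E) (w : 𝕜) (C : Set E) : Set E :=
  w • p +ᵥ (1 - w) • C

lemma mem_shrinkToward {w : 𝕜} {y : E} :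
    y ∈ shrinkToward p w C ↔ ∃ c ∈ C, w • p + (1 - w) • c = y := by
  simp [shrinkToward, mem_vadd_set, mem_smul_set]

variable [LinearOrder 𝕜] [IsStrictOrderedRing 𝕜]

lemma shrinkToward_antitoneOn (hC : Convex 𝕜 C) (hp : p ∈ C) :
    AntitoneOn (fun w : 𝕜 => shrinkToward p w C) (Iic 1) := by
  intro w _ w' (hw' : w' ≤ 1) hww' y hy
  obtain ⟨c, hc, rfl⟩ := mem_shrinkToward.1 hy
  have remainder_mem : (w' - w) • p + (1 - w') • c ∈ (1 - w) • C := by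
    rw [← sub_add_sub_cancel' w' w 1, hC.add_smul (sub_nonneg.2 hww') (sub_nonneg.2 hw')]
    exact add_mem_add (smul_mem_smul_set hp) (smul_mem_smul_set hc)
  obtain ⟨c', hc', hcc'⟩ := mem_smul_set.1 remainder_mem
  refine mem_shrinkToward.2 ⟨c', hc', ?_⟩
  rw [hcc']
  module

lemma combo_mem_shrinkToward (hC : Convex 𝕜 C) {w α β : 𝕜} {a b : E} (hw : w ≤ 1)
    (ha : a ∈ shrinkToward p w C) (hb : b ∈ C) (hα : 0 ≤ α) (hβ : 0 ≤ β) (hαβ : α + β = 1) :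
    α • a + β • b ∈ shrinkToward p (α * w) C := by
  obtain ⟨c, hc, rfl⟩ := mem_shrinkToward.1 ha
  have remainder_mem : (α * (1 - w)) • c + β • b ∈ (1 - α * w) • C := by
    rw [show 1 - α * w = α * (1 - w) + β by linear_combination -hαβ,
      hC.add_smul (mul_nonneg hα (sub_nonneg.2 hw)) hβ]
    exact add_mem_add (smul_mem_smul_set hc) (smul_mem_smul_set hb)
  obtain ⟨c', hc', hcc'⟩ := mem_smul_set.1 remainder_mem
  refine mem_shrinkToward.2 ⟨c', hc', ?_⟩
  rw [hcc']
  module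

lemma combo_mem_shrinkToward_of_le (hC : Convex 𝕜 C) (hp : p ∈ C) {w δ α β : 𝕜} {a b : E}
    (hw : w ∈ Icc 0 1) (ha : a ∈ shrinkToward p w C) (hb : b ∈ C) (hδ : 0 ≤ δ) (hδα : δ ≤ α)
    (hβ : 0 ≤ β) (hαβ : α + β = 1) :
    α • a + β • b ∈ shrinkToward p (δ * w) C := by
  have weights_le : δ * w ≤ α * w := mul_le_mul_of_nonneg_right hδα hw.1
  have weight_le_one : α * w ≤ 1 := mul_le_one₀ (by linarith) hw.1 hw.2
  exact shrinkToward_antitoneOn hC hp (weights_le.trans weight_le_one) weight_le_one weights_le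
    (combo_mem_shrinkToward hC hw.2 ha hb (hδ.trans hδα) hβ hαβ)

end ShrinkToward

lemma diam_shrinkToward {E : Type*} [SeminormedAddCommGroup E] [NormedSpace ℝ E] (p : E) {w : ℝ}
    (hw : w ≤ 1) (C : Set E) : diam (shrinkToward p w C) = (1 - w) * diam C := by
  rw [shrinkToward, diam_vadd, diam_smul₀, Real.norm_of_nonneg (sub_nonneg.2 hw)]

lemma dist_mean_le_diam_image {ι E : Type*} [SeminormedAddCommGroup E] [NormedSpace ℝ E]
    {s : Finset ι} (x : ι → E) {i : ι} (hi : i ∈ s) :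
    dist (x i) ((s.card : ℝ)⁻¹ • ∑ j ∈ s, x j) ≤ diam (x '' s) := by
  have hull_mem : ∀ j ∈ s, x j ∈ convexHull ℝ (x '' s) := fun j hj =>
    subset_convexHull ℝ _ (mem_image_of_mem x hj)
  have card_ne_zero : (s.card : ℝ) ≠ 0 := Nat.cast_ne_zero.2 (Finset.card_ne_zero_of_mem hi)
  have mean_mem : (s.card : ℝ)⁻¹ • ∑ j ∈ s, x j ∈ convexHull ℝ (x '' s) := by
    rw [Finset.smul_sum]
    exact (convex_convexHull ℝ _).sum_mem (fun _ _ => by positivity)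
      (by simp [card_ne_zero]) hull_mem
  have hull_bounded : Bornology.IsBounded (convexHull ℝ (x '' s)) :=
    isBounded_convexHull.2 (s.finite_toSet.image x).isBounded
  rw [← convexHull_diam (x '' s)]
  exact dist_le_diam_of_mem hull_bounded (hull_mem i hi) mean_mem

lemma min_one_sub_pow_mem_Icc {μ : ℝ} (hμ : μ ∈ Icc 0 1) (n : ℕ) :
    min μ (1 - μ) ^ n ∈ Icc 0 1 := by
  have min_nonneg : 0 ≤ min μ (1 - μ) := le_min hμ.1 (sub_nonneg.2 hμ.2)
  exact ⟨pow_nonneg min_nonneg n, pow_le_one₀ min_nonneg ((min_le_left _ _).trans hμ.2)⟩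

section Sweep

variable {X : Type*} [NormedAddCommGroup X] [NormedSpace ℝ X] {μ : ℝ}

lemma pairUpdate_eq_add_single_sub_single (μ : ℝ) (u : ℕ) (x : ℕ → X) :
    pairUpdate μ u x =
      x + Pi.single u (μ • (x (u + 1) - x u)) - Pi.single (u + 1) (μ • (x (u + 1) - x u)) := by
  ext v
  rcases eq_or_ne v u with rfl | hu
  · simp only [pairUpdate, ↓reduceIte, Pi.sub_apply, Pi.add_apply, Pi.single_eq_same, ne_eq,
      Nat.left_eq_add, one_ne_zero, not_false_eq_true, Pi.single_eq_of_ne, sub_zero]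
    module
  rcases eq_or_ne v (u + 1) with rfl | hu'
  · simp only [pairUpdate, Nat.add_eq_left, one_ne_zero, ↓reduceIte, Pi.sub_apply, Pi.add_apply,
      ne_eq, not_false_eq_true, Pi.single_eq_of_ne, add_zero, Pi.single_eq_same]
    module
  · simp [pairUpdate, hu, hu']

lemma sum_pairUpdate (μ : ℝ) {u : ℕ} {s : Finset ℕ} (hu : u ∈ s) (hu' : u + 1 ∈ s) (x : ℕ → X) :
    ∑ v ∈ s, pairUpdate μ u x v = ∑ v ∈ s, x v := by
  simp [pairUpdate_eq_add_single_sub_single, Finset.sum_add_distrib, Finset.sum_pi_single', hu, hu']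

lemma sweep_one (μ : ℝ) (x : ℕ → X) : sweep μ 1 x = x := rfl

lemma sweep_add_two (μ : ℝ) (n : ℕ) (x : ℕ → X) :
    sweep μ (n + 2) x = pairUpdate μ (n + 1) (sweep μ (n + 1) x) := by
  simp [sweep, List.range_succ]

lemma sweep_apply_of_lt (μ : ℝ) {n v : ℕ} (x : ℕ → X) (hv : n + 1 < v) :
    sweep μ (n + 1) x v = x v := by
  induction n with
  | zero => rfl
  | succ n ih =>
    rw [sweep_add_two, pairUpdate, if_neg (by lia), if_neg (by lia), ih (by lia)]

lemma sum_sweep (μ : ℝ) {n : ℕ} {s : Finset ℕ} (hs : Finset.Icc 1 (n + 1) ⊆ s) (x : ℕ → X) :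
    ∑ v ∈ s, sweep μ (n + 1) x v = ∑ v ∈ s, x v := by
  induction n with
  | zero => rfl
  | succ n ih =>
    rw [sweep_add_two, sum_pairUpdate μ (hs (by simp)) (hs (by simp)),
      ih ((Finset.Icc_subset_Icc_right (by lia)).trans hs)]

lemma sum_iterate_sweep (μ : ℝ) (n k : ℕ) (x : ℕ → X) :
    ∑ v ∈ Finset.Icc 1 (n + 1), (sweep μ (n + 1))^[k] x v = ∑ v ∈ Finset.Icc 1 (n + 1), x v := by
  induction k with
  | zero => rfl
  | succ k ih => rw [Function.iterate_succ_apply', sum_sweep μ subset_rfl, ih]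

lemma sweep_mem_shrinkToward (hμ : μ ∈ Icc 0 1) {C : Set X} (hC : Convex ℝ C) {n : ℕ} {x : ℕ → X}
    (hx : ∀ u ∈ Icc 1 (n + 1), x u ∈ C) {v : ℕ} (hv : v ∈ Icc 1 (n + 1)) :
    sweep μ (n + 1) x v ∈ shrinkToward (x 1) (min μ (1 - μ) ^ n) C := by
  induction n generalizing v with
  | zero =>
    obtain rfl : v = 1 := by simpa using hv
    exact mem_shrinkToward.2 ⟨x 1, hx 1 hv, by simp [sweep_one]⟩
  | succ n ih =>
    have hμ' : 0 ≤ 1 - μ := sub_nonneg.2 hμ.2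
    have min_nonneg : 0 ≤ min μ (1 - μ) := le_min hμ.1 hμ'
    have hw := min_one_sub_pow_mem_Icc hμ n
    have first_mem : x 1 ∈ C := hx 1 (by simp)
    have swept_mem : ∀ u ∈ Icc 1 (n + 1),
        sweep μ (n + 1) x u ∈ shrinkToward (x 1) (min μ (1 - μ) ^ n) C := fun _ =>
      ih fun u hu => hx u (Icc_subset_Icc_right (by lia) hu)
    have last_mem := swept_mem (n + 1) (by simp)
    have next_mem : sweep μ (n + 1) x (n + 2) ∈ C := by
      rw [sweep_apply_of_lt μ x (by lia)]
      exact hx (n + 2) (by simp)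
    rw [sweep_add_two, pairUpdate, pow_succ']
    split_ifs with hvn hvn'
    · exact combo_mem_shrinkToward_of_le hC first_mem hw last_mem next_mem min_nonneg
        (min_le_right _ _) hμ.1 (by ring)
    · exact combo_mem_shrinkToward_of_le hC first_mem hw last_mem next_mem min_nonneg
        (min_le_left _ _) hμ' (by ring)
    · have hvn_le : v ≤ n + 1 := by
        have := hv.2
        lia
      have weight_le : min μ (1 - μ) * min μ (1 - μ) ^ n ≤ min μ (1 - μ) ^ n :=
        mul_le_of_le_one_left hw.1 ((min_le_left _ _).trans hμ.2)
      exact shrinkToward_antitoneOn hC first_mem (weight_le.trans hw.2) hw.2 weight_le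
        (swept_mem v ⟨hv.1, hvn_le⟩)

lemma diam_sweep_le (hμ : μ ∈ Icc 0 1) (n : ℕ) (x : ℕ → X) :
    diam (sweep μ (n + 1) x '' Icc 1 (n + 1)) ≤
      (1 - min μ (1 - μ) ^ n) * diam (x '' Icc 1 (n + 1)) := by
  set w : ℝ := min μ (1 - μ) ^ n
  set C : Set X := convexHull ℝ (x '' Icc 1 (n + 1))
  have hC : Bornology.IsBounded C :=
    isBounded_convexHull.2 ((finite_Icc 1 (n + 1)).image x).isBounded
  have image_subset : sweep μ (n + 1) x '' Icc 1 (n + 1) ⊆ shrinkToward (x 1) w C :=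
    image_subset_iff.2 fun v hv => sweep_mem_shrinkToward hμ (convex_convexHull ℝ _)
      (fun u hu => subset_convexHull ℝ _ (mem_image_of_mem x hu)) hv
  calc diam (sweep μ (n + 1) x '' Icc 1 (n + 1))
      ≤ diam (shrinkToward (x 1) w C) := diam_mono image_subset ((hC.smul₀ _).vadd _)
    _ = (1 - w) * diam C := diam_shrinkToward _ (min_one_sub_pow_mem_Icc hμ n).2 _
    _ = (1 - w) * diam (x '' Icc 1 (n + 1)) := by rw [convexHull_diam]

lemma diam_iterate_sweep_le (hμ : μ ∈ Icc 0 1) (n k : ℕ) (x : ℕ → X) :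
    diam ((sweep μ (n + 1))^[k] x '' Icc 1 (n + 1)) ≤
      (1 - min μ (1 - μ) ^ n) ^ k * diam (x '' Icc 1 (n + 1)) := by
  have factor_nonneg : 0 ≤ 1 - min μ (1 - μ) ^ n :=
    sub_nonneg.2 (min_one_sub_pow_mem_Icc hμ n).2
  induction k with
  | zero => simp
  | succ k ih =>
    rw [Function.iterate_succ_apply', pow_succ', mul_assoc]
    exact (diam_sweep_le hμ n _).trans (mul_le_mul_of_nonneg_left ih factor_nonneg)

lemma dist_iterate_sweep_mean_le (hμ : μ ∈ Icc 0 1) {n : ℕ} (k : ℕ) (x : ℕ → X) {v : ℕ}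
    (hv : v ∈ Icc 1 (n + 1)) :
    dist ((sweep μ (n + 1))^[k] x v)
        (((n + 1 : ℕ) : ℝ)⁻¹ • ∑ u ∈ Finset.Icc 1 (n + 1), x u) ≤
      (1 - min μ (1 - μ) ^ n) ^ k * diam (x '' Icc 1 (n + 1)) := by
  have dist_le := dist_mean_le_diam_image ((sweep μ (n + 1))^[k] x) (Finset.mem_Icc.2 hv)
  rw [sum_iterate_sweep, Nat.card_Icc, Nat.add_sub_cancel, Finset.coe_Icc] at dist_le
  exact dist_le.trans (diam_iterate_sweep_le hμ n k x)

theorem sweep_iterates_tendsto_mean_general (hμ : μ ∈ Ioo 0 1) (N : ℕ) (x : ℕ → X) {v : ℕ}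
    (hv : v ∈ Icc 1 N) :
    Tendsto (fun k => (sweep μ N)^[k] x v) atTop
      (nhds ((N : ℝ)⁻¹ • ∑ u ∈ Finset.Icc 1 N, x u)) := by
  obtain ⟨n, rfl⟩ : ∃ n, N = n + 1 := Nat.exists_eq_add_one.2 (hv.1.trans hv.2)
  have min_pos : 0 < min μ (1 - μ) := lt_min hμ.1 (sub_pos.2 hμ.2)
  have factor_nonneg : 0 ≤ 1 - min μ (1 - μ) ^ n :=
    sub_nonneg.2 (min_one_sub_pow_mem_Icc (Ioo_subset_Icc_self hμ) n).2
  have factor_lt_one : 1 - min μ (1 - μ) ^ n < 1 := sub_lt_self 1 (pow_pos min_pos n)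
  have bound_tendsto_zero : Tendsto
      (fun k : ℕ => (1 - min μ (1 - μ) ^ n) ^ k * diam (x '' Icc 1 (n + 1))) atTop (nhds 0) := by
    simpa only [zero_mul] using
      (tendsto_pow_atTop_nhds_zero_of_lt_one factor_nonneg factor_lt_one).mul_const _
  exact tendsto_iff_dist_tendsto_zero.2 <| squeeze_zero (fun _ => dist_nonneg)
    (fun k => dist_iterate_sweep_mean_le (Ioo_subset_Icc_self hμ) k x hv) bound_tendsto_zero

end Sweep

/-- Repeated left-to-right sweeps bring every coordinate of the configuration
arbitrarily close to the (preserved) mean of the initial configuration: for every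
vertex `v ∈ {1,…,N}`, the iterates `(S^k x)(v)` converge to `(1/N)·∑_{u=1}^N x(u)`. -/
theorem sweep_iterates_tendsto_mean {X : Type*} [NormedAddCommGroup X] [NormedSpace ℝ X]
    (μ : ℝ) (hμ : μ ∈ Set.Ioc (0 : ℝ) (1 / 2)) (N : ℕ) (hN : 1 ≤ N) (x : ℕ → X) :
    ∀ v : ℕ, 1 ≤ v → v ≤ N →
      Tendsto (fun k => (sweep μ N)^[k] x v) atTop
        (nhds ((N : ℝ)⁻¹ • ∑ u ∈ Finset.Icc 1 N, x u)) := by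
  have hμ' : μ ∈ Ioo 0 1 := ⟨hμ.1, hμ.2.trans_lt one_half_lt_one⟩
  exact fun v hv hvN => sweep_iterates_tendsto_mean_general hμ' N x ⟨hv, hvN⟩
end
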